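/- arXiv:1611.06699 — 7 statements merged into one kernel-verified Lean document; each statement's English description precedes it below -/
import Mathlib

section
/- For all real numbers s, t, u, v, the limit c(s,t,u,v) := lim_{N→∞} (1/N) ∑_{j=1}^N ({js} − {jt})({ju} − {jv}) exists and is finite; that is, there exists a real number L such that the sequence N ↦ (1/N) ∑_{j=1}^N ({js} − {jt})({ju} − {jv}) tends to L as N → ∞. -/
open Filter Finset

/-!
The sequence `j ↦ {ja}` is almost periodic in the sense of Besicovitch: up to an arbitrarily small
mean absolute error it is a linear combination of characters `j ↦ z ^ j` with `|z| = 1`. Indeed,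
replacing the jump of `{x}` at the integers by a steep linear ramp makes it a continuous function on
the circle, which Weierstrass' theorem approximates uniformly, and few multiples `ja` fall on the
ramp: for irrational `a` any two that do have distant indices, while for rational `a` none does once
the ramp is steep enough. Differences and bounded products of almost periodic sequences are again
almost periodic, and an almost periodic sequence has a Cesàro mean because the characters do.
-/

open scoped Topology

section CesaroMean

section Algebraic

variable {E F : Type*} [AddCommMonoid E] [Module ℝ E] [AddCommMonoid F] [Module ℝ F]

/-- The average `(f 1 + ⋯ + f N) / N` as a linear function of the sequence `f`; it is `0` for
`N = 0`. -/
noncomputable def cesaroMean (N : ℕ) : (ℕ → E) →ₗ[ℝ] E :=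
  (N : ℝ)⁻¹ • ∑ j ∈ Icc 1 N, LinearMap.proj j

lemma cesaroMean_apply (N : ℕ) (f : ℕ → E) :
    cesaroMean N f = (N : ℝ)⁻¹ • ∑ j ∈ Icc 1 N, f j := by
  simp [cesaroMean]

lemma cesaroMean_const {N : ℕ} (hN : N ≠ 0) (c : E) : cesaroMean N (fun _ => c) = c := by
  rw [cesaroMean_apply, sum_const, Nat.card_Icc, Nat.add_sub_cancel, ← Nat.cast_smul_eq_nsmul ℝ,
    inv_smul_smul₀ (Nat.cast_ne_zero.2 hN)]

lemma map_cesaroMean (φ : E →ₗ[ℝ] F) (N : ℕ) (f : ℕ → E) :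
    φ (cesaroMean N f) = cesaroMean N fun j => φ (f j) := by
  simp only [cesaroMean_apply, map_smul, map_sum]

end Algebraic

lemma cesaroMean_mono {f g : ℕ → ℝ} (h : f ≤ g) (N : ℕ) : cesaroMean N f ≤ cesaroMean N g := by
  simp only [cesaroMean_apply, smul_eq_mul]
  gcongr with j
  exact h j

lemma norm_cesaroMean_le {E : Type*} [SeminormedAddCommGroup E] [NormedSpace ℝ E]
    (N : ℕ) (f : ℕ → E) : ‖cesaroMean N f‖ ≤ cesaroMean N fun j => ‖f j‖ := by
  rw [cesaroMean_apply, cesaroMean_apply, norm_smul, norm_inv, Real.norm_natCast, smul_eq_mul]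
  gcongr
  exact norm_sum_le _ _

/-- The sequence `f` has a Cesàro mean, i.e. the averages `(f 1 + ⋯ + f N) / N` converge. -/
def CesaroConvergent {E : Type*} [AddCommMonoid E] [Module ℝ E] [TopologicalSpace E]
    (f : ℕ → E) : Prop :=
  ∃ L, Tendsto (fun N => cesaroMean N f) atTop (𝓝 L)

namespace CesaroConvergent

section Topological

variable {E F : Type*} [AddCommMonoid E] [Module ℝ E] [TopologicalSpace E]
  [AddCommMonoid F] [Module ℝ F] [TopologicalSpace F]

lemma zero : CesaroConvergent (0 : ℕ → E) := ⟨0, by simp only [map_zero, tendsto_const_nhds]⟩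

lemma add [ContinuousAdd E] {f g : ℕ → E} (hf : CesaroConvergent f) (hg : CesaroConvergent g) :
    CesaroConvergent (f + g) := by
  obtain ⟨L, hL⟩ := hf
  obtain ⟨M, hM⟩ := hg
  exact ⟨L + M, by simpa only [map_add] using hL.add hM⟩

lemma map {f : ℕ → E} (hf : CesaroConvergent f) (φ : E →L[ℝ] F) :
    CesaroConvergent fun j => φ (f j) := by
  obtain ⟨L, hL⟩ := hf
  exact ⟨φ L, ((φ.continuous.tendsto L).comp hL).congr fun N => map_cesaroMean (φ : E →ₗ[ℝ] F) N f⟩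

end Topological

lemma of_approx {E : Type*} [SeminormedAddCommGroup E] [NormedSpace ℝ E] [CompleteSpace E]
    {f : ℕ → E}
    (h : ∀ ε > 0, ∃ g, CesaroConvergent g ∧
      ∀ᶠ N in atTop, cesaroMean N (fun j => ‖f j - g j‖) ≤ ε) :
    CesaroConvergent f := by
  refine cauchy_map_iff_exists_tendsto.1 (Metric.cauchy_iff.2 ⟨inferInstance, fun ε hε => ?_⟩)
  obtain ⟨g, ⟨L, hL⟩, hfg⟩ := h (ε / 4) (by positivity)
  have near_limit : ∀ᶠ N in atTop, dist (cesaroMean N f) L < ε / 2 := by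
    filter_upwards [hfg, Metric.tendsto_nhds.1 hL (ε / 4) (by positivity)] with N hfgN hgN
    have hfg' : dist (cesaroMean N f) (cesaroMean N g) ≤ ε / 4 := by
      rw [dist_eq_norm, ← map_sub]
      exact (norm_cesaroMean_le N (f - g)).trans hfgN
    linarith [dist_triangle (cesaroMean N f) (cesaroMean N g) L]
  refine ⟨Metric.ball L (ε / 2), near_limit, fun x hx y hy => ?_⟩
  linarith [dist_triangle_right x y L, Metric.mem_ball.1 hx, Metric.mem_ball.1 hy]

end CesaroConvergent

end CesaroMean

section TrigonometricPolynomials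

lemma norm_sum_Icc_pow_le {z : ℂ} (hz : ‖z‖ ≤ 1) (hz1 : z ≠ 1) (N : ℕ) :
    ‖∑ j ∈ Icc 1 N, z ^ j‖ ≤ 2 / ‖z - 1‖ := by
  rw [← Ico_add_one_right_eq_Icc, geom_sum_Ico hz1 (Nat.le_add_left 1 N), norm_div]
  gcongr
  have norm_pow_le (n : ℕ) : ‖z ^ n‖ ≤ 1 := norm_pow z n ▸ pow_le_one₀ (norm_nonneg z) hz
  linarith [norm_sub_le (z ^ (N + 1)) (z ^ 1), norm_pow_le (N + 1), norm_pow_le 1]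

lemma cesaroConvergent_pow {z : ℂ} (hz : ‖z‖ ≤ 1) : CesaroConvergent fun j => z ^ j := by
  rcases eq_or_ne z 1 with rfl | hz1
  · refine ⟨1, tendsto_const_nhds.congr' ?_⟩
    filter_upwards [eventually_ne_atTop 0] with N hN
    simp only [one_pow, cesaroMean_const hN]
  · refine ⟨0, ?_⟩
    simp only [cesaroMean_apply]
    exact (tendsto_inv_atTop_nhds_zero_nat (𝕜 := ℝ)).zero_smul_isBoundedUnder_le
      (isBoundedUnder_of ⟨_, norm_sum_Icc_pow_le hz hz1⟩)

/-- The character `j ↦ z ^ j` of `ℕ`, as a homomorphism in `z`. -/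
def powCharacter : Circle →* (ℕ → ℂ) where
  toFun z j := (z : ℂ) ^ j
  map_one' := by ext; simp
  map_mul' z w := by ext; simp [mul_pow]

/-- The algebra of trigonometric polynomials on `ℕ`, i.e. of finite linear combinations of
characters `j ↦ z ^ j` with `|z| = 1`. -/
def trigPolynomials : Subalgebra ℂ (ℕ → ℂ) :=
  Algebra.adjoin ℂ (MonoidHom.mrange powCharacter : Set (ℕ → ℂ))

lemma powCharacter_mem_trigPolynomials (z : Circle) : powCharacter z ∈ trigPolynomials :=
  Algebra.subset_adjoin ⟨z, rfl⟩

lemma cesaroConvergent_of_mem_trigPolynomials {p : ℕ → ℂ} (hp : p ∈ trigPolynomials) :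
    CesaroConvergent p := by
  rw [trigPolynomials, ← Subalgebra.mem_toSubmodule, Algebra.adjoin_eq_span,
    Submonoid.closure_eq] at hp
  induction hp using Submodule.span_induction with
  | mem p hp =>
    obtain ⟨z, rfl⟩ := hp
    exact cesaroConvergent_pow z.norm_coe.le
  | zero => exact .zero
  | add p q _ _ hp hq => exact hp.add hq
  | smul c p _ hp => exact hp.map (c • ContinuousLinearMap.id ℝ ℂ)

lemma exists_norm_le_of_mem_trigPolynomials {p : ℕ → ℂ} (hp : p ∈ trigPolynomials) :
    ∃ C, ∀ j, ‖p j‖ ≤ C := by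
  induction hp using Algebra.adjoin_induction with
  | mem p hp =>
    obtain ⟨z, rfl⟩ := hp
    exact ⟨1, fun j => by simp [powCharacter, z.norm_coe]⟩
  | algebraMap c => exact ⟨‖c‖, fun _ => le_rfl⟩
  | add p q _ _ hp hq =>
    obtain ⟨B, hB⟩ := hp
    obtain ⟨C, hC⟩ := hq
    exact ⟨B + C, fun j => norm_add_le_of_le (hB j) (hC j)⟩
  | mul p q _ _ hp hq =>
    obtain ⟨B, hB⟩ := hp
    obtain ⟨C, hC⟩ := hq
    exact ⟨B * C, fun j => norm_mul_le_of_le (hB j) (hC j)⟩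

end TrigonometricPolynomials

/-- Almost periodicity of a sequence in the sense of Besicovitch (`B¹`): approximability by
trigonometric polynomials with respect to the upper mean of the absolute error. -/
def IsBesicovitchAlmostPeriodic (f : ℕ → ℂ) : Prop :=
  ∀ ε > 0, ∃ p ∈ trigPolynomials, ∀ᶠ N in atTop, cesaroMean N (fun j => ‖f j - p j‖) ≤ ε

namespace IsBesicovitchAlmostPeriodic

variable {f g : ℕ → ℂ}

lemma cesaroConvergent (hf : IsBesicovitchAlmostPeriodic f) : CesaroConvergent f :=
  .of_approx fun ε hε =>
    let ⟨p, hp, hfp⟩ := hf ε hε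
    ⟨p, cesaroConvergent_of_mem_trigPolynomials hp, hfp⟩

lemma of_approx (h : ∀ ε > 0, ∃ g, IsBesicovitchAlmostPeriodic g ∧
      ∀ᶠ N in atTop, cesaroMean N (fun j => ‖f j - g j‖) ≤ ε) :
    IsBesicovitchAlmostPeriodic f := by
  intro ε hε
  obtain ⟨g, hg, hfg⟩ := h (ε / 2) (half_pos hε)
  obtain ⟨p, hp, hgp⟩ := hg (ε / 2) (half_pos hε)
  refine ⟨p, hp, ?_⟩
  filter_upwards [hfg, hgp] with N hfgN hgpN
  calc cesaroMean N (fun j => ‖f j - p j‖)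
      ≤ cesaroMean N ((fun j => ‖f j - g j‖) + fun j => ‖g j - p j‖) :=
        cesaroMean_mono (fun j => norm_sub_le_norm_sub_add_norm_sub (f j) (g j) (p j)) N
    _ ≤ ε := by rw [map_add]; linarith

lemma of_uniform_approx
    (h : ∀ ε > 0, ∃ p ∈ trigPolynomials, ∀ j, ‖f j - p j‖ ≤ ε) :
    IsBesicovitchAlmostPeriodic f := by
  intro ε hε
  obtain ⟨p, hp, hfp⟩ := h ε hε
  refine ⟨p, hp, ?_⟩
  filter_upwards [eventually_ne_atTop 0] with N hN
  exact (cesaroMean_mono hfp N).trans (cesaroMean_const hN ε).le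

lemma sub (hf : IsBesicovitchAlmostPeriodic f) (hg : IsBesicovitchAlmostPeriodic g) :
    IsBesicovitchAlmostPeriodic (f - g) := by
  intro ε hε
  obtain ⟨p, hp, hfp⟩ := hf (ε / 2) (half_pos hε)
  obtain ⟨q, hq, hgq⟩ := hg (ε / 2) (half_pos hε)
  refine ⟨p - q, sub_mem hp hq, ?_⟩
  filter_upwards [hfp, hgq] with N hfpN hgqN
  calc cesaroMean N (fun j => ‖(f - g) j - (p - q) j‖)
      ≤ cesaroMean N ((fun j => ‖f j - p j‖) + fun j => ‖g j - q j‖) :=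
        cesaroMean_mono (fun j => by
          simpa only [Pi.sub_apply, Pi.add_apply, sub_sub_sub_comm] using
            norm_sub_le (f j - p j) (g j - q j)) N
    _ ≤ ε := by rw [map_add]; linarith

lemma mul (hf : IsBesicovitchAlmostPeriodic f) (hg : IsBesicovitchAlmostPeriodic g)
    (hg_bdd : ∃ C, ∀ j, ‖g j‖ ≤ C) : IsBesicovitchAlmostPeriodic (f * g) := by
  intro ε hε
  obtain ⟨C, hC⟩ := hg_bdd
  have hC0 : 0 ≤ C := (norm_nonneg _).trans (hC 0)
  obtain ⟨p, hp, hfp⟩ := hf (ε / (2 * (C + 1))) (by positivity)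
  obtain ⟨B, hB⟩ := exists_norm_le_of_mem_trigPolynomials hp
  have hB0 : 0 ≤ B := (norm_nonneg _).trans (hB 0)
  obtain ⟨q, hq, hgq⟩ := hg (ε / (2 * (B + 1))) (by positivity)
  refine ⟨p * q, mul_mem hp hq, ?_⟩
  have pointwise : (fun j => ‖(f * g) j - (p * q) j‖) ≤
      (C • fun j => ‖f j - p j‖) + B • fun j => ‖g j - q j‖ := fun j =>
    calc ‖f j * g j - p j * q j‖ = ‖g j * (f j - p j) + p j * (g j - q j)‖ := by ring_nf
      _ ≤ C * ‖f j - p j‖ + B * ‖g j - q j‖ :=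
        norm_add_le_of_le (norm_mul_le_of_le (hC j) le_rfl) (norm_mul_le_of_le (hB j) le_rfl)
  filter_upwards [hfp, hgq] with N hfpN hgqN
  calc cesaroMean N (fun j => ‖(f * g) j - (p * q) j‖)
      ≤ C * cesaroMean N (fun j => ‖f j - p j‖) + B * cesaroMean N (fun j => ‖g j - q j‖) := by
        simpa only [map_add, map_smul, smul_eq_mul] using cesaroMean_mono pointwise N
    _ ≤ C * (ε / (2 * (C + 1))) + B * (ε / (2 * (B + 1))) := by gcongr
    _ ≤ (C + 1) * (ε / (2 * (C + 1))) + (B + 1) * (ε / (2 * (B + 1))) := by gcongr <;> linarith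
    _ = ε := by field_simp; ring

end IsBesicovitchAlmostPeriodic

section ContinuousFunctions

lemma fourier_nsmul_mem_trigPolynomials {T : ℝ} (n : ℤ) (x : AddCircle T) :
    (fun j : ℕ => fourier n (j • x)) ∈ trigPolynomials := by
  convert powCharacter_mem_trigPolynomials (AddCircle.toCircle (n • x)) using 1
  ext j
  simp [powCharacter, fourier_apply, smul_comm n j x, AddCircle.toCircle_nsmul]

lemma isBesicovitchAlmostPeriodic_nsmul {T : ℝ} [Fact (0 < T)] (g : C(AddCircle T, ℂ))
    (x : AddCircle T) : IsBesicovitchAlmostPeriodic fun j => g (j • x) := by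
  have mem_of_mem_span : ∀ p ∈ Submodule.span ℂ (Set.range (fourier (T := T))),
      (fun j : ℕ => p (j • x)) ∈ trigPolynomials := by
    intro p hp
    induction hp using Submodule.span_induction with
    | mem p hp =>
      obtain ⟨n, rfl⟩ := hp
      exact fourier_nsmul_mem_trigPolynomials n x
    | zero => exact zero_mem _
    | add p q _ _ hp hq => exact add_mem hp hq
    | smul c p _ hp => exact Subalgebra.smul_mem _ hp c
  refine .of_uniform_approx fun ε hε => ?_
  have hg : g ∈ closure (Submodule.span ℂ (Set.range (fourier (T := T))) : Set _) := by
    rw [← Submodule.topologicalClosure_coe, span_fourier_closure_eq_top]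
    exact Submodule.mem_top
  obtain ⟨p, hp, hgp⟩ := Metric.mem_closure_iff.1 hg ε hε
  refine ⟨_, mem_of_mem_span p hp, fun j => ?_⟩
  rw [← dist_eq_norm]
  exact (ContinuousMap.dist_apply_le_dist _).trans hgp.le

lemma isBesicovitchAlmostPeriodic_comp_fract {f : ℝ → ℂ} (hf : ContinuousOn f (Set.Icc 0 1))
    (h01 : f 0 = f 1) (a : ℝ) : IsBesicovitchAlmostPeriodic fun j => f (Int.fract (j * a)) := by
  have periodic : Function.Periodic (f ∘ Int.fract) 1 := fun x => by simp
  let g : C(AddCircle (1 : ℝ), ℂ) :=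
    ⟨periodic.lift, (hf.comp_fract'' h01).quotient_lift _⟩
  convert isBesicovitchAlmostPeriodic_nsmul g a using 2 with j
  rw [← AddCircle.coe_nsmul, nsmul_eq_mul]
  rfl

end ContinuousFunctions

section FractionalParts

lemma card_le_of_gaps {s : Finset ℕ} {K N : ℕ} (hK : 0 < K) (hsN : ∀ i ∈ s, i ≤ N)
    (hgap : ∀ i ∈ s, ∀ j ∈ s, i < j → K ≤ j - i) : #s ≤ N / K + 1 := by
  have ne_of_lt : ∀ i ∈ s, ∀ j ∈ s, i < j → i / K ≠ j / K := fun i hi j hj hij =>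
    (calc i / K < i / K + 1 := Nat.lt_succ_self _
      _ = (i + K) / K := (Nat.add_div_right i hK).symm
      _ ≤ j / K := Nat.div_le_div_right (by have := hgap i hi j hj hij; omega)).ne
  rw [← card_range (N / K + 1)]
  refine card_le_card_of_injOn (· / K) (fun i hi => ?_) fun i hi j hj hij => ?_
  · exact mem_coe.2 (mem_range_succ_iff.2 (Nat.div_le_div_right (hsN i hi)))
  · rcases lt_trichotomy i j with hlt | heq | hgt
    · exact absurd hij (ne_of_lt i hi j hj hlt)
    · exact heq
    · exact absurd hij.symm (ne_of_lt j hj i hi hgt)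

lemma cesaroMean_indicator_le_of_gaps {S : Set ℕ} {K : ℕ} (hK : 0 < K)
    (hgap : ∀ i ∈ S, ∀ j ∈ S, i < j → K ≤ j - i) (N : ℕ) :
    cesaroMean N (S.indicator (1 : ℕ → ℝ)) ≤ (K : ℝ)⁻¹ + (N : ℝ)⁻¹ := by
  classical
  have card_le : #{j ∈ Icc 1 N | j ∈ S} ≤ N / K + 1 :=
    card_le_of_gaps hK (fun i hi => (mem_Icc.1 (mem_filter.1 hi).1).2)
      fun i hi j hj => hgap i (mem_filter.1 hi).2 j (mem_filter.1 hj).2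
  rcases N.eq_zero_or_pos with rfl | hN
  · simp [cesaroMean_apply]
  calc cesaroMean N (S.indicator (1 : ℕ → ℝ))
      = (N : ℝ)⁻¹ * #{j ∈ Icc 1 N | j ∈ S} := by
        simp [cesaroMean_apply, Set.indicator_apply]
    _ ≤ (N : ℝ)⁻¹ * (N / K + 1) := by
        gcongr
        exact (Nat.cast_le.2 card_le).trans (by push_cast; gcongr; exact Nat.cast_div_le)
    _ = (K : ℝ)⁻¹ + (N : ℝ)⁻¹ := by field_simp

lemma exists_pos_le_abs_mul_sub_intCast {a : ℝ} (ha : Irrational a) (K : ℕ) :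
    ∃ δ > 0, ∀ k : ℕ, 0 < k → k < K → ∀ m : ℤ, δ ≤ |k * a - m| := by
  have dist_round_pos : ∀ k ∈ Ioo 0 K, 0 < |k * a - round (k * a)| := fun k hk =>
    abs_pos.2 (sub_ne_zero.2
      ((ha.natCast_mul (Finset.mem_Ioo.1 hk).1.ne').ne_int _))
  have small : ∀ᶠ δ : ℝ in 𝓝[>] 0, ∀ k ∈ Ioo 0 K, δ ≤ |k * a - round (k * a)| :=
    (eventually_all_finset _).2 fun k hk =>
      ((eventually_le_nhds (dist_round_pos k hk)).filter_mono nhdsWithin_le_nhds)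
  obtain ⟨δ, hδ, hδ0⟩ := (small.and self_mem_nhdsWithin).exists
  exact ⟨δ, hδ0, fun k hk0 hkK m => (hδ k (Finset.mem_Ioo.2 ⟨hk0, hkK⟩)).trans (round_le _ _)⟩

lemma fract_mul_ratCast_le (j : ℕ) (r : ℚ) :
    Int.fract (j * (r : ℝ)) ≤ 1 - (r.den : ℝ)⁻¹ := by
  have den_pos : (0 : ℝ) < r.den := Nat.cast_pos.2 r.pos
  have eq_div : (j * r : ℝ) = ((j * r.num : ℤ) : ℝ) / r.den := by
    rw [Rat.cast_def]; push_cast; ring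
  have mod_le : (j * r.num) % (r.den : ℤ) ≤ r.den - 1 :=
    Int.le_sub_one_of_lt (Int.emod_lt_of_pos _ (Int.natCast_pos.2 r.pos))
  have mod_le' : (((j * r.num) % (r.den : ℤ) : ℤ) : ℝ) ≤ r.den - 1 := by exact_mod_cast mod_le
  rw [eq_div, Int.fract_div_intCast_eq_div_intCast_mod, div_le_iff₀ den_pos, sub_mul, one_mul,
    inv_mul_cancel₀ den_pos.ne']
  exact mod_le'

lemma exists_gaps_of_irrational {a : ℝ} (ha : Irrational a) (K : ℕ) :
    ∃ δ > 0, ∀ i j : ℕ, 1 - δ < Int.fract (i * a) → 1 - δ < Int.fract (j * a) → i < j →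
      K ≤ j - i := by
  obtain ⟨δ, hδ, hsep⟩ := exists_pos_le_abs_mul_sub_intCast ha K
  refine ⟨δ, hδ, fun i j hi hj hij => ?_⟩
  by_contra! hlt
  have far := hsep (j - i) (Nat.sub_pos_of_lt hij) hlt (⌊j * a⌋ - ⌊i * a⌋)
  have eq_fract_sub : ((j - i : ℕ) : ℝ) * a - ((⌊j * a⌋ - ⌊i * a⌋ : ℤ) : ℝ)
      = Int.fract (j * a) - Int.fract (i * a) := by
    rw [Nat.cast_sub hij.le, Int.fract, Int.fract]; push_cast; ring
  have close : |Int.fract (j * a) - Int.fract (i * a)| < δ :=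
    abs_sub_lt_iff.2
      ⟨by linarith [Int.fract_lt_one (j * a)], by linarith [Int.fract_lt_one (i * a)]⟩
  rw [eq_fract_sub] at far
  exact far.not_gt close

lemma exists_cesaroMean_indicator_fract_le (a : ℝ) {ε : ℝ} (hε : 0 < ε) :
    ∃ δ > 0, ∀ᶠ N in atTop,
      cesaroMean N ({j : ℕ | 1 - δ < Int.fract (j * a)}.indicator (1 : ℕ → ℝ)) ≤ ε := by
  by_cases ha : Irrational a
  · obtain ⟨K, hK⟩ := exists_nat_one_div_lt (half_pos hε)
    obtain ⟨δ, hδ, hgap⟩ := exists_gaps_of_irrational ha (K + 1)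
    refine ⟨δ, hδ, ?_⟩
    have inv_small : ∀ᶠ N : ℕ in atTop, (N : ℝ)⁻¹ ≤ ε / 2 :=
      tendsto_inv_atTop_nhds_zero_nat.eventually_le_const (half_pos hε)
    filter_upwards [inv_small] with N hN
    have mean_le := cesaroMean_indicator_le_of_gaps K.succ_pos
      (S := {j : ℕ | 1 - δ < Int.fract (j * a)}) (fun i hi j hj => hgap i j hi hj) N
    rw [one_div] at hK
    push_cast at mean_le
    linarith
  · obtain ⟨r, rfl⟩ := not_not.1 ha
    refine ⟨(r.den : ℝ)⁻¹, inv_pos.2 (Nat.cast_pos.2 r.pos), .of_forall fun N => ?_⟩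
    have empty : {j : ℕ | 1 - (r.den : ℝ)⁻¹ < Int.fract (j * (r : ℝ))} = ∅ :=
      Set.eq_empty_of_forall_notMem fun j hj => (fract_mul_ratCast_le j r).not_gt hj
    rw [empty, Set.indicator_empty', map_zero]
    exact hε.le

lemma abs_sub_min_div_le_indicator {δ x : ℝ} (hδ : 0 < δ) (hx0 : 0 ≤ x) (hx1 : x ≤ 1) :
    |x - min x ((1 - x) / δ)| ≤ (Set.Ioi (1 - δ)).indicator 1 x := by
  rw [abs_of_nonneg (sub_nonneg.2 (min_le_left _ _))]
  by_cases hx : x ∈ Set.Ioi (1 - δ)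
  · rw [Set.indicator_of_mem hx, Pi.one_apply]
    have : 0 ≤ min x ((1 - x) / δ) := le_min hx0 (div_nonneg (sub_nonneg.2 hx1) hδ.le)
    linarith
  · have x_le : x ≤ 1 - δ := not_lt.1 hx
    have le_ramp : x ≤ (1 - x) / δ := by
      rw [le_div_iff₀ hδ]
      nlinarith
    rw [Set.indicator_of_notMem hx, min_eq_left le_ramp, sub_self]

lemma isBesicovitchAlmostPeriodic_fract (a : ℝ) :
    IsBesicovitchAlmostPeriodic fun j => ((Int.fract (j * a) : ℝ) : ℂ) := by
  refine .of_approx fun ε hε => ?_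
  obtain ⟨δ, hδ, hmean⟩ := exists_cesaroMean_indicator_fract_le a hε
  have ramp_continuous : Continuous fun x : ℝ => ((min x ((1 - x) / δ) : ℝ) : ℂ) := by fun_prop
  refine ⟨_, isBesicovitchAlmostPeriodic_comp_fract ramp_continuous.continuousOn
    (by simp [hδ.le]) a, ?_⟩
  filter_upwards [hmean] with N hN
  refine (cesaroMean_mono (fun j => ?_) N).trans hN
  rw [← Complex.ofReal_sub, Complex.norm_real, Real.norm_eq_abs]
  exact abs_sub_min_div_le_indicator hδ (Int.fract_nonneg _) (Int.fract_lt_one _).le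

lemma abs_fract_sub_fract_lt_one (x y : ℝ) : |Int.fract x - Int.fract y| < 1 :=
  abs_sub_lt_iff.2 ⟨by linarith [Int.fract_lt_one x, Int.fract_nonneg y],
    by linarith [Int.fract_lt_one y, Int.fract_nonneg x]⟩

end FractionalParts

/-- For all real numbers `s, t, u, v`, the limit
`c(s,t,u,v) = lim_{N→∞} (1/N) ∑_{j=1}^N ({js} − {jt})({ju} − {jv})` exists and is finite. -/
theorem stmt_0 (s t u v : ℝ) :
    ∃ L : ℝ, Tendsto
      (fun N : ℕ => (1 / (N : ℝ)) *
        ∑ j ∈ Finset.Icc 1 N,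
          (Int.fract ((j : ℝ) * s) - Int.fract ((j : ℝ) * t)) *
          (Int.fract ((j : ℝ) * u) - Int.fract ((j : ℝ) * v)))
      atTop (nhds L) := by
  have fract_sub (x y : ℝ) :
      IsBesicovitchAlmostPeriodic fun j => ((Int.fract (j * x) - Int.fract (j * y) : ℝ) : ℂ) := by
    simpa only [Complex.ofReal_sub, Pi.sub_def] using
      (isBesicovitchAlmostPeriodic_fract x).sub (isBesicovitchAlmostPeriodic_fract y)
  have bounded : ∃ C, ∀ j : ℕ, ‖((Int.fract (j * u) - Int.fract (j * v) : ℝ) : ℂ)‖ ≤ C :=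
    ⟨1, fun j => by
      simpa only [Complex.norm_real, Real.norm_eq_abs] using
        (abs_fract_sub_fract_lt_one (j * u) (j * v)).le⟩
  obtain ⟨L, hL⟩ :=
    ((fract_sub s t).mul (fract_sub u v) bounded).cesaroConvergent.map Complex.reCLM
  refine ⟨L, hL.congr fun N => ?_⟩
  simp only [cesaroMean_apply, Pi.mul_apply, ← Complex.ofReal_mul, Complex.reCLM_apply,
    Complex.ofReal_re, smul_eq_mul, one_div]
end

section
/- For all real numbers s, t, u, v, the limit c̃(s,t,u,v) := lim_{N→∞} (1/(2N)) ∑_{j=1}^N (h_j(t−u) + h_j(s−v) − h_j(s−u) − h_j(t−v)) exists and is finite, where h_j(x) := {jx}(1 − {jx}); that is, there exists a real number L such that the sequence tends to L as N → ∞. -/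
open Filter Finset

/-!
Each of the four averages converges separately. The function `y ↦ {y}(1 - {y})` is continuous and
`1`-periodic, so its values at the multiples of `x` are those of a continuous function on the circle
along the orbit of the rotation by `x`. A linear contraction `T` of a Banach space whose
eigenvectors span a dense subspace is mean ergodic: an eigenvector with eigenvalue `1` is fixed, any
other is of the form `T z - z` and its averages telescope to `0`, and convergence passes to the
closure because the averages are equicontinuous. For the Koopman operator of a rotation the
eigenvectors are the Fourier monomials, which span a dense subspace.
-/

open Function Module Topology Uniformity

section Equicontinuous

variable {ι X Y : Type*} [TopologicalSpace X] [UniformSpace Y]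

theorem isClosed_setOf_cauchy_map_of_equicontinuous {F : ι → X → Y} (hF : Equicontinuous F)
    (l : Filter ι) : IsClosed {x | Cauchy (l.map (F · x))} := by
  refine isClosed_of_closure_subset fun x hx ↦ ?_
  have hl : l.NeBot := by
    obtain ⟨y, hy⟩ := closure_nonempty_iff.mp ⟨x, hx⟩
    exact (cauchy_map_iff.mp hy).1
  refine cauchy_map_iff.mpr ⟨hl, fun U hU ↦ ?_⟩
  obtain ⟨V, hV, hVsymm, hVU⟩ := comp_comp_symm_mem_uniformity_sets hU
  obtain ⟨y, hxy, hy⟩ := mem_closure_iff_nhds.mp hx _ (hF x V hV)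
  have hyV : ∀ᶠ p in l ×ˢ l, (F p.1 y, F p.2 y) ∈ V := (cauchy_map_iff.mp hy).2 hV
  refine hyV.mono fun ⟨m, n⟩ hmn ↦ ?_
  exact hVU ⟨F n y, ⟨F m y, hxy m, hmn⟩, hVsymm.symm _ _ (hxy n)⟩

end Equicontinuous

section MeanErgodic

variable {𝕜 E : Type*} [RCLike 𝕜] [NormedAddCommGroup E] [NormedSpace 𝕜 E]

/-- The subspace of mean ergodic vectors of a linear operator `T`: those `x` for which the
averages `(x + T x + ⋯ + T ^ (n - 1) x) / n` converge in norm. -/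
def meanErgodicSubmodule (T : End 𝕜 E) : Submodule 𝕜 E where
  carrier := {x | ∃ y, Tendsto (birkhoffAverage 𝕜 T id · x) atTop (𝓝 y)}
  zero_mem' := ⟨0, IsFixedPt.tendsto_birkhoffAverage 𝕜 (map_zero T) id⟩
  add_mem' := by
    rintro x x' ⟨y, hy⟩ ⟨y', hy'⟩
    refine ⟨y + y', (hy.add hy').congr fun n ↦ ?_⟩
    simp only [birkhoffAverage, birkhoffSum, id, iterate_map_add, sum_add_distrib, smul_add]
  smul_mem' := by
    rintro c x ⟨y, hy⟩
    refine ⟨c • y, (hy.const_smul c).congr fun n ↦ ?_⟩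
    simp only [birkhoffAverage, birkhoffSum, id, ← Module.End.pow_apply, map_smul, ← smul_sum,
      smul_comm c]

variable {T : End 𝕜 E}

theorem isClosed_meanErgodicSubmodule [CompleteSpace E] (hT : LipschitzWith 1 T) :
    IsClosed (meanErgodicSubmodule T : Set E) := by
  simpa only [cauchy_map_iff_exists_tendsto] using!
    isClosed_setOf_cauchy_map_of_equicontinuous
      (uniformEquicontinuous_birkhoffAverage 𝕜 hT uniformContinuous_id).equicontinuous atTop

theorem range_sub_one_le_meanErgodicSubmodule (hT : LipschitzWith 1 T) :
    LinearMap.range (T - 1) ≤ meanErgodicSubmodule T := by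
  rintro _ ⟨x, rfl⟩
  have orbit_bounded : Bornology.IsBounded (Set.range (id <| T^[·] x)) :=
    isBounded_iff_forall_norm_le.mpr ⟨‖x‖, Set.forall_mem_range.mpr fun n ↦ by
      simpa [iterate_map_zero] using (hT.iterate n).dist_le_mul x 0⟩
  refine ⟨0, (tendsto_birkhoffAverage_apply_sub_birkhoffAverage 𝕜 orbit_bounded).congr fun n ↦ ?_⟩
  simp only [birkhoffAverage, birkhoffSum, id, LinearMap.sub_apply, End.one_apply,
    iterate_map_sub, sum_sub_distrib, smul_sub]

theorem eigenspace_le_meanErgodicSubmodule (hT : LipschitzWith 1 T) (μ : 𝕜) :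
    End.eigenspace T μ ≤ meanErgodicSubmodule T := by
  intro x hx
  rw [End.mem_eigenspace_iff] at hx
  obtain rfl | hμ := eq_or_ne μ 1
  · exact ⟨x, IsFixedPt.tendsto_birkhoffAverage 𝕜 (hx.trans (one_smul 𝕜 x)) id⟩
  · refine range_sub_one_le_meanErgodicSubmodule hT ⟨(μ - 1)⁻¹ • x, ?_⟩
    rw [map_smul, LinearMap.sub_apply, hx, End.one_apply, inv_smul_eq_iff₀ (sub_ne_zero.mpr hμ),
      sub_smul, one_smul]

theorem meanErgodicSubmodule_eq_top_of_iSup_eigenspace_dense [CompleteSpace E]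
    (hT : LipschitzWith 1 T) (hdense : (⨆ μ, End.eigenspace T μ).topologicalClosure = ⊤) :
    meanErgodicSubmodule T = ⊤ :=
  top_unique <| hdense ▸ Submodule.topologicalClosure_minimal _
    (iSup_le (eigenspace_le_meanErgodicSubmodule hT)) (isClosed_meanErgodicSubmodule hT)

end MeanErgodic

section Koopman

variable (𝕜 : Type*) {X : Type*} [RCLike 𝕜] [TopologicalSpace X]

/-- The Koopman operator `f ↦ f ∘ φ` of a continuous self-map `φ`, on continuous functions. -/
def koopman (φ : C(X, X)) : End 𝕜 C(X, 𝕜) :=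
  (ContinuousMap.compRightAlgHom 𝕜 𝕜 φ).toLinearMap

variable {𝕜}

theorem koopman_apply (φ : C(X, X)) (f : C(X, 𝕜)) (x : X) : koopman 𝕜 φ f x = f (φ x) :=
  rfl

theorem koopman_iterate_apply (φ : C(X, X)) (n : ℕ) (f : C(X, 𝕜)) (x : X) :
    (koopman 𝕜 φ)^[n] f x = f (φ^[n] x) := by
  induction n generalizing f with
  | zero => rfl
  | succ n ih => rw [iterate_succ_apply, ih, koopman_apply, iterate_succ_apply']

theorem birkhoffAverage_koopman_apply (φ : C(X, X)) (n : ℕ) (f : C(X, 𝕜)) (x : X) :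
    birkhoffAverage 𝕜 (koopman 𝕜 φ) id n f x = birkhoffAverage 𝕜 φ f n x := by
  simp [birkhoffAverage, birkhoffSum, koopman_iterate_apply]

theorem lipschitzWith_koopman [CompactSpace X] (φ : C(X, X)) : LipschitzWith 1 (koopman 𝕜 φ) :=
  LipschitzWith.mk_one fun _ _ ↦
    (ContinuousMap.dist_le dist_nonneg).mpr fun x ↦ ContinuousMap.dist_apply_le_dist (φ x)

theorem exists_tendsto_birkhoffAverage_of_iSup_eigenspace_dense [CompactSpace X] {φ : C(X, X)}
    (hdense : (⨆ μ, End.eigenspace (koopman 𝕜 φ) μ).topologicalClosure = ⊤)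
    (f : C(X, 𝕜)) (x : X) : ∃ L, Tendsto (birkhoffAverage 𝕜 φ f · x) atTop (𝓝 L) := by
  obtain ⟨g, hg⟩ : f ∈ meanErgodicSubmodule (koopman 𝕜 φ) := by
    rw [meanErgodicSubmodule_eq_top_of_iSup_eigenspace_dense (lipschitzWith_koopman φ) hdense]
    trivial
  exact ⟨g x, ((continuous_eval_const x).tendsto g |>.comp hg).congr fun n ↦
    birkhoffAverage_koopman_apply φ n f x⟩

end Koopman

section Rotation

variable {T : ℝ}

theorem fourier_mem_eigenspace_koopman_addRight (a : AddCircle T) (n : ℤ) :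
    fourier n ∈ End.eigenspace (koopman ℂ (ContinuousMap.addRight a)) (fourier n a) := by
  refine End.mem_eigenspace_iff.mpr (ContinuousMap.ext fun x ↦ ?_)
  simp [koopman_apply, fourier_apply, AddCircle.toCircle_add, mul_comm]

variable [Fact (0 < T)]

theorem topologicalClosure_iSup_eigenspace_koopman_addRight (a : AddCircle T) :
    (⨆ μ, End.eigenspace (koopman ℂ (ContinuousMap.addRight a)) μ).topologicalClosure = ⊤ := by
  refine top_unique (span_fourier_closure_eq_top.ge.trans (Submodule.topologicalClosure_mono ?_))
  refine Submodule.span_le.mpr (Set.range_subset_iff.mpr fun n ↦ ?_)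
  exact Submodule.mem_iSup_of_mem _ (fourier_mem_eigenspace_koopman_addRight a n)

theorem exists_tendsto_average_periodic_arithmetic_progression {f : ℝ → ℝ} (hf : Continuous f)
    (hper : Periodic f T) (x d : ℝ) :
    ∃ L, Tendsto (fun N : ℕ ↦ (N : ℝ)⁻¹ * ∑ k ∈ range N, f (x + k * d)) atTop (𝓝 L) := by
  let F : C(AddCircle T, ℂ) := ⟨fun y ↦ (hper.lift y : ℂ),
    Complex.continuous_ofReal.comp (continuous_coinduced_dom.mpr hf)⟩
  obtain ⟨L, hL⟩ := exists_tendsto_birkhoffAverage_of_iSup_eigenspace_dense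
    (topologicalClosure_iSup_eigenspace_koopman_addRight (d : AddCircle T)) F (x : AddCircle T)
  refine ⟨L.re, ((Complex.continuous_re.tendsto L).comp hL).congr fun N ↦ ?_⟩
  have F_orbit (k : ℕ) :
      F ((ContinuousMap.addRight (d : AddCircle T))^[k] x) = f (x + k * d) := by
    rw [ContinuousMap.coe_addRight, add_right_iterate, ← nsmul_eq_mul]
    rfl
  simp only [comp_apply, birkhoffAverage, birkhoffSum, F_orbit, ← Complex.ofReal_sum,
    smul_eq_mul, ← Complex.ofReal_natCast, ← Complex.ofReal_inv, ← Complex.ofReal_mul,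
    Complex.ofReal_re]

end Rotation

theorem continuous_fract_mul_one_sub_fract :
    Continuous fun x : ℝ ↦ Int.fract x * (1 - Int.fract x) :=
  ContinuousOn.comp_fract'' (f := fun t : ℝ ↦ t * (1 - t)) (by fun_prop) (by norm_num)

theorem exists_tendsto_average_fract_mul_one_sub_fract (x : ℝ) :
    ∃ L, Tendsto (fun N : ℕ ↦ (N : ℝ)⁻¹ *
      ∑ j ∈ Icc 1 N, Int.fract (j * x) * (1 - Int.fract (j * x))) atTop (𝓝 L) := by
  obtain ⟨L, hL⟩ := exists_tendsto_average_periodic_arithmetic_progression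
    continuous_fract_mul_one_sub_fract ((Int.fract_periodic ℝ).comp fun t ↦ t * (1 - t)) x x
  refine ⟨L, hL.congr fun N ↦ ?_⟩
  simp only [← Ico_add_one_right_eq_Icc, sum_Ico_eq_sum_range, Nat.add_sub_cancel, Nat.cast_add,
    Nat.cast_one, add_mul, one_mul]

/-- For all real `s, t, u, v`, the limit
`c̃(s,t,u,v) = lim_{N→∞} (1/(2N)) ∑_{j=1}^N (h_j(t−u) + h_j(s−v) − h_j(s−u) − h_j(t−v))`
exists and is finite, where `h_j(x) = {jx}(1 − {jx})`. -/
theorem stmt_1 (s t u v : ℝ) :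
    ∃ L : ℝ, Tendsto
      (fun N : ℕ =>
        (1 / (2 * (N : ℝ))) *
          ∑ j ∈ Finset.Icc 1 N,
            ((fun x : ℝ => Int.fract ((j : ℝ) * x) * (1 - Int.fract ((j : ℝ) * x))) (t - u)
            + (fun x : ℝ => Int.fract ((j : ℝ) * x) * (1 - Int.fract ((j : ℝ) * x))) (s - v)
            - (fun x : ℝ => Int.fract ((j : ℝ) * x) * (1 - Int.fract ((j : ℝ) * x))) (s - u)
            - (fun x : ℝ => Int.fract ((j : ℝ) * x) * (1 - Int.fract ((j : ℝ) * x))) (t - v)))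
      atTop (nhds L) := by
  obtain ⟨a, ha⟩ := exists_tendsto_average_fract_mul_one_sub_fract (t - u)
  obtain ⟨b, hb⟩ := exists_tendsto_average_fract_mul_one_sub_fract (s - v)
  obtain ⟨c, hc⟩ := exists_tendsto_average_fract_mul_one_sub_fract (s - u)
  obtain ⟨d, hd⟩ := exists_tendsto_average_fract_mul_one_sub_fract (t - v)
  refine ⟨1 / 2 * (a + b - c - d),
    ((((ha.add hb).sub hc).sub hd).const_mul (1 / 2)).congr fun N ↦ ?_⟩
  simp only [sum_sub_distrib, sum_add_distrib]
  ring
end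

section
/- Let θ > 0 and let (w_j)_{j≥1} be a sequence of non-negative real numbers. Suppose that (1/n) ∑_{j=1}^n Ψ_n(j) w_j converges to a real number L > 0 as n → ∞. Then (1/log n) ∑_{j=1}^n (Ψ_n(j)/j) w_j converges to Lθ as n → ∞. -/
open Filter Finset

/-- `Ψ_n(j) = ∏_{i=0}^{j−1} (n−i)/(θ+n−1−i)`. -/
noncomputable def Psi (θ : ℝ) (n j : ℕ) : ℝ :=
  ∏ i ∈ Finset.range j, ((n : ℝ) - i) / (θ + (n : ℝ) - 1 - i)

/-!
Let `A n` be the mean `(1/n) ∑_{j ≤ n} Ψ_n(j) w_j` and `H n = ∑_{j ≤ n} (Ψ_n(j)/j) w_j`. The ratio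
`Ψ_{n+1}(j) / Ψ_n(j)` is the explicit rational function `(n+1)(θ+n-j) / ((n+1-j)(θ+n))`, and it
makes the increments of `H - A` depend on `A` alone:
`(H - A)(n+1) - (H - A)(n) = θ/(θ+n) • A n`.
Since `θ/(θ+n) ~ θ/n`, the sum of these increments is asymptotically `θ` times a logarithmic average
of the convergent sequence `A`, while the remaining term `A n` is killed by the factor `1/log n`.
-/

open Asymptotics Topology

section LogarithmicAverages

theorem tendsto_harmonic_div_log_atTop :
    Tendsto (fun n : ℕ ↦ (harmonic n : ℝ) / Real.log n) atTop (𝓝 1) := by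
  have log_atTop : Tendsto (fun n : ℕ ↦ Real.log n) atTop atTop :=
    Real.tendsto_log_atTop.comp tendsto_natCast_atTop_atTop
  have h := (Real.tendsto_harmonic_sub_log.div_atTop log_atTop).add_const 1
  rw [zero_add] at h
  refine h.congr' ?_
  filter_upwards [log_atTop.eventually_ne_atTop 0] with n hn
  rw [sub_div, div_self hn, sub_add_cancel]

theorem sum_range_inv_succ_eq_harmonic (n : ℕ) :
    ∑ k ∈ range n, ((k : ℝ) + 1)⁻¹ = harmonic n := by
  simp [harmonic]

variable {E : Type*} [NormedAddCommGroup E] [NormedSpace ℝ E]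

theorem tendsto_weighted_cesaro_smul {g : ℕ → ℝ} {u : ℕ → E} {l : E} (hg : 0 ≤ g)
    (hg_sum : Tendsto (fun n ↦ ∑ k ∈ range n, g k) atTop atTop) (hu : Tendsto u atTop (𝓝 l)) :
    Tendsto (fun n ↦ (∑ k ∈ range n, g k)⁻¹ • ∑ k ∈ range n, g k • u k) atTop (𝓝 l) := by
  have deviation : (fun k ↦ g k • (u k - l)) =o[atTop] g := by
    have hu_sub : (fun k ↦ u k - l) =o[atTop] (fun _ ↦ (1 : ℝ)) :=
      (isLittleO_one_iff ℝ).2 (tendsto_sub_nhds_zero_iff.2 hu)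
    simpa only [smul_eq_mul, mul_one] using (isBigO_refl g atTop).smul_isLittleO hu_sub
  have average_deviation := (deviation.sum_range hg hg_sum).tendsto_inv_smul_nhds_zero
  rw [← tendsto_sub_nhds_zero_iff]
  refine average_deviation.congr' ?_
  filter_upwards [hg_sum.eventually_ne_atTop 0] with n hn
  simp only [smul_sub, sum_sub_distrib, ← sum_smul]
  rw [inv_smul_smul₀ hn]

theorem tendsto_inv_log_smul_sum_range {b : ℕ → E} {l : E}
    (hb : Tendsto (fun k : ℕ ↦ ((k : ℝ) + 1) • b k) atTop (𝓝 l)) :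
    Tendsto (fun n : ℕ ↦ (1 / Real.log n) • ∑ k ∈ range n, b k) atTop (𝓝 l) := by
  have harmonic_average : Tendsto (fun n : ℕ ↦ (harmonic n : ℝ)⁻¹ • ∑ k ∈ range n, b k)
      atTop (𝓝 l) := by
    have h := tendsto_weighted_cesaro_smul (g := fun k ↦ ((k : ℝ) + 1)⁻¹)
      (fun k ↦ by positivity)
      (by simpa only [one_div] using Real.tendsto_sum_range_one_div_nat_succ_atTop) hb
    refine h.congr fun n ↦ ?_
    rw [sum_range_inv_succ_eq_harmonic]
    congr 1
    exact sum_congr rfl fun k _ ↦ inv_smul_smul₀ (by positivity) _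
  have h := tendsto_harmonic_div_log_atTop.smul harmonic_average
  rw [one_smul] at h
  refine h.congr' ?_
  filter_upwards [eventually_ne_atTop 0] with n hn
  have harmonic_ne_zero : (harmonic n : ℝ) ≠ 0 := by exact_mod_cast (harmonic_pos hn).ne'
  rw [smul_smul]
  congr 1
  field_simp

theorem tendsto_succ_mul_div_const_add (θ : ℝ) :
    Tendsto (fun k : ℕ ↦ ((k : ℝ) + 1) * (θ / (θ + k))) atTop (𝓝 θ) := by
  have h := tendsto_add_mul_div_add_mul_atTop_nhds θ θ θ (one_ne_zero (α := ℝ))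
  rw [div_one] at h
  refine h.congr fun k ↦ ?_
  ring

end LogarithmicAverages

theorem Psi_succ_right (θ : ℝ) (n j : ℕ) :
    Psi θ n (j + 1) = Psi θ n j * ((n - j) / (θ + n - 1 - j)) :=
  prod_range_succ _ _

theorem Psi_succ_succ (θ : ℝ) (n j : ℕ) :
    Psi θ (n + 1) (j + 1) = (n + 1) / (θ + n) * Psi θ n j := by
  rw [Psi, prod_range_succ', mul_comm, Psi]
  push_cast
  congr 1
  · ring
  · exact prod_congr rfl fun i _ ↦ by ring

theorem Psi_succ_left_mul {θ : ℝ} (hθ : ∀ m : ℕ, θ + m ≠ 0) {n j : ℕ} (hjn : j ≤ n) :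
    Psi θ (n + 1) j * ((n + 1 - j) * (θ + n)) = Psi θ n j * ((θ + n - j) * (n + 1)) := by
  cases j with
  | zero => simp [Psi, mul_comm]
  | succ j =>
    have first_factor_ne_zero := hθ n
    have last_factor_ne_zero : θ + n - 1 - j ≠ 0 := by
      convert hθ (n - (j + 1)) using 1
      push_cast [hjn]
      ring
    rw [Psi_succ_succ, Psi_succ_right]
    push_cast
    field_simp
    ring

theorem inv_sub_inv_mul_Psi_succ_left {θ : ℝ} (hθ : ∀ m : ℕ, θ + m ≠ 0) {n j : ℕ}
    (hj : 1 ≤ j) (hjn : j ≤ n) :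
    (1 / (j : ℝ) - 1 / (n + 1)) * Psi θ (n + 1) j =
      (1 / (j : ℝ) - 1 / n) * Psi θ n j + θ / (θ + n) * (1 / n * Psi θ n j) := by
  have ratio := Psi_succ_left_mul hθ hjn
  have hθn := hθ n
  have hj0 : (j : ℝ) ≠ 0 := by positivity
  have hn0 : (n : ℝ) ≠ 0 := by have := hj.trans hjn; positivity
  field_simp
  linear_combination (n : ℝ) * ratio

section PsiSums

variable {E : Type*} [AddCommGroup E] [Module ℝ E]

/-- The mean `(1/n) ∑_{j=1}^n Ψ_n(j) w_j`, whose convergence is the hypothesis of the theorem. At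
`n = 0` it is `0`. -/
noncomputable def psiMean (θ : ℝ) (w : ℕ → E) (n : ℕ) : E :=
  (1 / (n : ℝ)) • ∑ j ∈ Icc 1 n, Psi θ n j • w j

/-- The sum `∑_{j=1}^n (Ψ_n(j)/j) w_j`, whose growth relative to `log n` is the conclusion of the
theorem. -/
noncomputable def psiHarmonicSum (θ : ℝ) (w : ℕ → E) (n : ℕ) : E :=
  ∑ j ∈ Icc 1 n, (Psi θ n j / j) • w j

theorem psiHarmonicSum_sub_psiMean (θ : ℝ) (w : ℕ → E) (n : ℕ) :
    psiHarmonicSum θ w n - psiMean θ w n =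
      ∑ j ∈ Icc 1 n, ((1 / (j : ℝ) - 1 / n) * Psi θ n j) • w j := by
  rw [psiHarmonicSum, psiMean, smul_sum, ← sum_sub_distrib]
  refine sum_congr rfl fun j _ ↦ ?_
  rw [smul_smul, ← sub_smul]
  congr 1
  ring

theorem psiHarmonicSum_sub_psiMean_succ {θ : ℝ} (hθ : ∀ m : ℕ, θ + m ≠ 0) (w : ℕ → E) (n : ℕ) :
    psiHarmonicSum θ w (n + 1) - psiMean θ w (n + 1) =
      psiHarmonicSum θ w n - psiMean θ w n + (θ / (θ + n)) • psiMean θ w n := by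
  rw [psiHarmonicSum_sub_psiMean, psiHarmonicSum_sub_psiMean, sum_Icc_succ_top (by lia), sub_self,
    zero_mul, zero_smul, add_zero, psiMean, smul_sum, smul_sum, ← sum_add_distrib]
  refine sum_congr rfl fun j hj ↦ ?_
  obtain ⟨one_le_j, j_le_n⟩ := mem_Icc.1 hj
  rw [smul_smul, smul_smul, ← add_smul, Nat.cast_succ,
    inv_sub_inv_mul_Psi_succ_left hθ one_le_j j_le_n, mul_assoc]

theorem psiHarmonicSum_eq_psiMean_add_sum {θ : ℝ} (hθ : ∀ m : ℕ, θ + m ≠ 0) (w : ℕ → E) (n : ℕ) :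
    psiHarmonicSum θ w n =
      psiMean θ w n + ∑ k ∈ range n, (θ / (θ + k)) • psiMean θ w k := by
  rw [← sub_eq_iff_eq_add']
  induction n with
  | zero => simp [psiHarmonicSum, psiMean]
  | succ n ih => rw [psiHarmonicSum_sub_psiMean_succ hθ, ih, sum_range_succ]

end PsiSums

theorem stmt_2_general {E : Type*} [NormedAddCommGroup E] [NormedSpace ℝ E] {θ : ℝ}
    (hθ : ∀ m : ℕ, θ + m ≠ 0) {w : ℕ → E} {L : E}
    (hconv : Tendsto (fun n : ℕ ↦ (1 / (n : ℝ)) • ∑ j ∈ Icc 1 n, Psi θ n j • w j)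
      atTop (𝓝 L)) :
    Tendsto (fun n : ℕ ↦ (1 / Real.log n) • ∑ j ∈ Icc 1 n, (Psi θ n j / j) • w j)
      atTop (𝓝 (θ • L)) := by
  change Tendsto (psiMean θ w) atTop (𝓝 L) at hconv
  change Tendsto (fun n : ℕ ↦ (1 / Real.log n) • psiHarmonicSum θ w n) atTop (𝓝 (θ • L))
  have inv_log_tendsto_zero : Tendsto (fun n : ℕ ↦ 1 / Real.log n) atTop (𝓝 0) :=
    tendsto_const_nhds.div_atTop (Real.tendsto_log_atTop.comp tendsto_natCast_atTop_atTop)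
  have mean_term : Tendsto (fun n : ℕ ↦ (1 / Real.log n) • psiMean θ w n) atTop (𝓝 0) := by
    simpa only [zero_smul] using inv_log_tendsto_zero.smul hconv
  have increments :
      Tendsto (fun k : ℕ ↦ ((k : ℝ) + 1) • (θ / (θ + k)) • psiMean θ w k) atTop (𝓝 (θ • L)) := by
    simpa only [smul_smul] using (tendsto_succ_mul_div_const_add θ).smul hconv
  simpa only [psiHarmonicSum_eq_psiMean_add_sum hθ, smul_add, zero_add] using
    mean_term.add (tendsto_inv_log_smul_sum_range increments)

/-- If `(1/n) ∑_{j=1}^n Ψ_n(j) w_j → L > 0`, then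
`(1/log n) ∑_{j=1}^n (Ψ_n(j)/j) w_j → Lθ`. -/
theorem stmt_2 (θ : ℝ) (hθ : 0 < θ) (w : ℕ → ℝ) (hw : ∀ j, 0 ≤ w j) (L : ℝ) (hL : 0 < L)
    (hconv : Tendsto
      (fun n : ℕ => (1 / (n : ℝ)) * ∑ j ∈ Finset.Icc 1 n, Psi θ n j * w j)
      atTop (nhds L)) :
    Tendsto
      (fun n : ℕ => (1 / Real.log n) * ∑ j ∈ Finset.Icc 1 n, Psi θ n j / (j : ℝ) * w j)
      atTop (nhds (L * θ)) := by
  have hθ_add (m : ℕ) : θ + m ≠ 0 := by positivity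
  simpa only [smul_eq_mul, mul_comm θ L] using stmt_2_general hθ_add hconv
end

section
/- Let θ > 0. For every integer n ≥ 1, (1/n) ∑_{j=1}^n Ψ_n(j) = 1/θ. -/
open Finset

/-! Consecutive values satisfy `θ Ψ_n(j+1) = (n-j) Ψ_n(j) - (n-(j+1)) Ψ_n(j+1)`, so
`θ ∑_{j=1}^n Ψ_n(j)` telescopes to `n Ψ_n(0) = n`. All this needs is that the denominator of the
`i`-th factor is `θ` plus the numerator of the next one. -/

theorem mul_sum_prod_div_add_succ {K : Type*} [Field K] (c : K) (a : ℕ → K) {m : ℕ}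
    (hne : ∀ i < m, c + a (i + 1) ≠ 0) :
    c * ∑ j ∈ range m, ∏ i ∈ range (j + 1), a i / (c + a (i + 1)) =
      a 0 - a m * ∏ i ∈ range m, a i / (c + a (i + 1)) := by
  let P (j : ℕ) : K := ∏ i ∈ range j, a i / (c + a (i + 1))
  have prod_rec (j : ℕ) (hj : j < m) : (c + a (j + 1)) * P (j + 1) = a j * P j := by
    simp only [P, prod_range_succ]
    field_simp [hne j hj]
  calc
    c * ∑ j ∈ range m, P (j + 1) = ∑ j ∈ range m, (a j * P j - a (j + 1) * P (j + 1)) := by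
      rw [mul_sum]
      refine sum_congr rfl fun j hj ↦ ?_
      linear_combination prod_rec j (mem_range.mp hj)
    _ = a 0 * P 0 - a m * P m := sum_range_sub' (fun j ↦ a j * P j) m
    _ = a 0 - a m * P m := by simp [P]

theorem mul_sum_Icc_Psi {θ : ℝ} {n m : ℕ} (hne : ∀ i < m, θ + (n : ℝ) - 1 - i ≠ 0) :
    θ * ∑ j ∈ Icc 1 m, Psi θ n j = n - ((n : ℝ) - m) * Psi θ n m := by
  have denom_eq (i : ℕ) : θ + ((n : ℝ) - (i + 1 : ℕ)) = θ + n - 1 - i := by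
    push_cast
    ring
  have sum_shift : ∑ j ∈ Icc 1 m, Psi θ n j = ∑ j ∈ range m, Psi θ n (j + 1) := by
    rw [range_eq_Ico, sum_Ico_add' (Psi θ n) 0 m 1]
    rfl
  rw [sum_shift]
  simpa only [Psi, denom_eq, Nat.cast_zero, sub_zero] using
    mul_sum_prod_div_add_succ θ (fun i ↦ (n : ℝ) - i) fun i hi ↦ (denom_eq i).trans_ne (hne i hi)

theorem stmt_3_general {θ : ℝ} {n : ℕ} (hn : 1 ≤ n) (hθ : ∀ k < n, θ + k ≠ 0) :
    (1 / (n : ℝ)) * ∑ j ∈ Icc 1 n, Psi θ n j = 1 / θ := by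
  have denom_ne_zero (i : ℕ) (hi : i < n) : θ + (n : ℝ) - 1 - i ≠ 0 := by
    have hk := hθ (n - 1 - i) (by lia)
    rwa [Nat.sub_sub, Nat.cast_sub (by lia), Nat.cast_add, Nat.cast_one, ← add_sub_assoc,
      ← sub_sub] at hk
  have sum_eq : θ * ∑ j ∈ Icc 1 n, Psi θ n j = n := by
    simpa only [sub_self, zero_mul, sub_zero] using mul_sum_Icc_Psi denom_ne_zero
  have n_ne_zero : (n : ℝ) ≠ 0 := Nat.cast_ne_zero.mpr (by lia)
  have θ_ne_zero : θ ≠ 0 := by simpa only [Nat.cast_zero, add_zero] using hθ 0 hn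
  rw [one_div_mul_eq_div, div_eq_div_iff n_ne_zero θ_ne_zero, mul_comm, sum_eq, one_mul]

/-- For every `n ≥ 1`, `(1/n) ∑_{j=1}^n Ψ_n(j) = 1/θ`. -/
theorem stmt_3 (θ : ℝ) (hθ : 0 < θ) (n : ℕ) (hn : 1 ≤ n) :
    (1 / (n : ℝ)) * ∑ j ∈ Finset.Icc 1 n, Psi θ n j = 1 / θ :=
  stmt_3_general hn fun k _ ↦ by positivity
end

section
/- Let θ > 0. For every integer n ≥ 1, ∑_{1≤j,k≤n} (1/(jk)) (Ψ_n(j)Ψ_n(k) − Ψ_n(j+k)·1_{j+k≤n}) = ∑_{k=0}^{n−1} 1/(θ+k)², where 1_{j+k≤n} equals 1 if j+k ≤ n and 0 otherwise. -/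
open Finset

/-!
Up to a factor `θ / j`, `Ψ_n(j)` is the mean number of `j`-cycles of an Ewens permutation of size
`n`. It satisfies the Pascal-like recurrence
`Ψ_{n+1}(m) = Ψ_n(m) + m / (θ + n) * (Ψ_n(m - 1) - Ψ_n(m))`.
Dividing by `m` makes the correction telescope, so `∑_j Ψ_n(j) / j` grows by `1 / (θ + n)`.
For `m = j + k`, the splitting `(j + k) / (j * k) = 1 / j + 1 / k` makes it telescope in each
variable separately, so `∑_{j,k} Ψ_n(j + k) / (j * k)` grows by `2 / (θ + n) * ∑_j Ψ_n(j) / j`,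
which is the growth of `(∑_{k<n} 1 / (θ + k)) ^ 2 - ∑_{k<n} 1 / (θ + k) ^ 2`.
-/

section FallingRatio

variable {K : Type*} [Field K]

/-- The quotient `n(n-1)⋯(n-j+1) / ((θ+n-1)(θ+n-2)⋯(θ+n-j))` of falling factorials, that is
`Ψ_n(j)` with `θ` in an arbitrary field. For `j > n` it is zero because the factor `i = n` has
numerator `0`, whatever the remaining denominators are. -/
def fallingRatio (θ : K) (n j : ℕ) : K :=
  ∏ i ∈ range j, ((n : K) - i) / (θ + (n : K) - 1 - i)

namespace fallingRatio

@[simp]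
lemma zero_right (θ : K) (n : ℕ) : fallingRatio θ n 0 = 1 :=
  prod_range_zero _

lemma succ_right (θ : K) (n j : ℕ) :
    fallingRatio θ n (j + 1) =
      fallingRatio θ n j * (((n : K) - j) / (θ + (n : K) - 1 - j)) :=
  prod_range_succ _ _

lemma succ_succ (θ : K) (n j : ℕ) :
    fallingRatio θ (n + 1) (j + 1) = ((n : K) + 1) / (θ + n) * fallingRatio θ n j := by
  rw [fallingRatio, prod_range_succ', mul_comm, fallingRatio]
  congr 1
  · simp [← add_assoc]
  · refine prod_congr rfl fun i _ ↦ ?_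
    push_cast
    congr 1 <;> ring

lemma eq_zero_of_lt (θ : K) {n j : ℕ} (h : n < j) : fallingRatio θ n j = 0 :=
  prod_eq_zero (mem_range.2 h) (by simp)

lemma ite_le_eq (θ : K) (n j : ℕ) :
    (if j ≤ n then fallingRatio θ n j else 0) = fallingRatio θ n j :=
  ite_eq_left_iff.2 fun h ↦ (eq_zero_of_lt θ (not_le.1 h)).symm

lemma sum_range_sub_succ (θ : K) {n a M : ℕ} (h : n < a + M) :
    ∑ k ∈ range M, (fallingRatio θ n (a + k) - fallingRatio θ n (a + k + 1)) =
      fallingRatio θ n a := by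
  simpa [eq_zero_of_lt θ h, add_assoc] using sum_range_sub' (fun k ↦ fallingRatio θ n (a + k)) M

lemma succ_right_mul {θ : K} {n : ℕ} (hθ : ∀ k < n, θ + k ≠ 0) (j : ℕ) :
    fallingRatio θ n (j + 1) * (θ + n - 1 - j) = fallingRatio θ n j * (n - j) := by
  rcases lt_trichotomy j n with hlt | rfl | hgt
  · obtain ⟨d, rfl⟩ := Nat.exists_eq_add_of_lt hlt
    have hden : θ + ((j + d + 1 : ℕ) : K) - 1 - j ≠ 0 := by
      convert hθ d (by omega) using 1
      push_cast
      ring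
    rw [succ_right, mul_assoc, div_mul_cancel₀ _ hden]
  · rw [eq_zero_of_lt θ j.lt_succ_self, sub_self, zero_mul, mul_zero]
  · rw [eq_zero_of_lt θ hgt, eq_zero_of_lt θ (hgt.trans j.lt_succ_self), zero_mul, zero_mul]

lemma succ_left {θ : K} {n : ℕ} (hθ : ∀ k < n + 1, θ + k ≠ 0) (j : ℕ) :
    fallingRatio θ (n + 1) (j + 1) = fallingRatio θ n (j + 1) +
      (j + 1) * (fallingRatio θ n j - fallingRatio θ n (j + 1)) / (θ + n) := by
  have hn : θ + (n : K) ≠ 0 := hθ n n.lt_succ_self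
  rw [succ_succ]
  field_simp
  linear_combination -succ_right_mul (fun k hk ↦ hθ k (hk.trans n.lt_succ_self)) j

variable [CharZero K]

theorem sum_div_succ {θ : K} {n M : ℕ} (hθ : ∀ k < n, θ + k ≠ 0) (hM : n ≤ M) :
    ∑ j ∈ range M, fallingRatio θ n (j + 1) / (j + 1) = ∑ k ∈ range n, 1 / (θ + k) := by
  induction n with
  | zero => simp [eq_zero_of_lt]
  | succ n ih =>
    have hterm (j : ℕ) : fallingRatio θ (n + 1) (j + 1) / (j + 1) =
        fallingRatio θ n (j + 1) / (j + 1) +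
          (fallingRatio θ n j - fallingRatio θ n (j + 1)) / (θ + n) := by
      rw [succ_left hθ, add_div, mul_div_assoc, mul_div_cancel_left₀ _ j.cast_add_one_ne_zero]
    have htele : ∑ j ∈ range M, (fallingRatio θ n j - fallingRatio θ n (j + 1)) = 1 := by
      simpa using sum_range_sub_succ θ (a := 0) (by omega : n < 0 + M)
    simp only [hterm]
    rw [sum_add_distrib, ← sum_div, htele, sum_range_succ,
      ih (fun k hk ↦ hθ k (hk.trans n.lt_succ_self)) (by omega)]

lemma succ_left_div_mul {θ : K} {n : ℕ} (hθ : ∀ k < n + 1, θ + k ≠ 0) (j k : ℕ) :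
    fallingRatio θ (n + 1) (j + k + 2) / ((j + 1) * (k + 1)) =
      fallingRatio θ n (j + k + 2) / ((j + 1) * (k + 1)) +
        ((fallingRatio θ n (j + k + 1) - fallingRatio θ n (j + k + 2)) / (j + 1) +
          (fallingRatio θ n (j + k + 1) - fallingRatio θ n (j + k + 2)) / (k + 1)) / (θ + n) := by
  have hn : θ + (n : K) ≠ 0 := hθ n n.lt_succ_self
  have hj : (j : K) + 1 ≠ 0 := j.cast_add_one_ne_zero
  have hk : (k : K) + 1 ≠ 0 := k.cast_add_one_ne_zero
  rw [succ_left hθ (j + k + 1)]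
  push_cast
  field_simp
  ring

lemma sum_sum_sub_succ_div {θ : K} {n M : ℕ} (hθ : ∀ k < n, θ + k ≠ 0) (hM : n ≤ M) :
    ∑ j ∈ range M, ∑ k ∈ range M,
        (fallingRatio θ n (j + k + 1) - fallingRatio θ n (j + k + 2)) / (j + 1) =
      ∑ k ∈ range n, 1 / (θ + k) := by
  rw [← sum_div_succ hθ hM]
  refine sum_congr rfl fun j _ ↦ ?_
  rw [← sum_div, ← sum_range_sub_succ θ (by omega : n < j + 1 + M)]
  simp only [add_right_comm j 1, add_assoc, one_add_one_eq_two]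

theorem sum_sum_div_mul {θ : K} {n M : ℕ} (hθ : ∀ k < n, θ + k ≠ 0) (hM : n ≤ M) :
    ∑ j ∈ range M, ∑ k ∈ range M, fallingRatio θ n (j + k + 2) / ((j + 1) * (k + 1)) =
      (∑ k ∈ range n, 1 / (θ + k)) ^ 2 - ∑ k ∈ range n, 1 / (θ + k) ^ 2 := by
  induction n with
  | zero => simp [eq_zero_of_lt]
  | succ n ih =>
    have hθn : ∀ k < n, θ + k ≠ 0 := fun k hk ↦ hθ k (hk.trans n.lt_succ_self)
    have hnM : n ≤ M := by omega
    have hleft := sum_sum_sub_succ_div hθn hnM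
    have hright : ∑ j ∈ range M, ∑ k ∈ range M,
        (fallingRatio θ n (j + k + 1) - fallingRatio θ n (j + k + 2)) / (k + 1) =
          ∑ k ∈ range n, 1 / (θ + k) := by
      rw [sum_comm, ← hleft]
      simp only [add_comm]
    simp only [succ_left_div_mul hθ, sum_add_distrib, ← sum_div]
    simp only [← sum_div] at hleft hright
    rw [hleft, hright, ih hθn hnM, sum_range_succ, sum_range_succ, ← one_div_pow (θ + n)]
    ring

end fallingRatio

theorem stmt_5_general [CharZero K] (θ : K) (n : ℕ) (hθ : ∀ k < n, θ + k ≠ 0) :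
    ∑ j ∈ Icc 1 n, ∑ k ∈ Icc 1 n, (1 / ((j : K) * (k : K))) *
        (fallingRatio θ n j * fallingRatio θ n k -
          (if j + k ≤ n then fallingRatio θ n (j + k) else 0)) =
      ∑ k ∈ range n, 1 / (θ + (k : K)) ^ 2 := by
  have hIcc (f : ℕ → K) : ∑ j ∈ Icc 1 n, f j = ∑ j ∈ range n, f (j + 1) := by
    rw [range_eq_Ico, sum_Ico_add', zero_add, Ico_add_one_right_eq_Icc]
  calc
    _ = ∑ j ∈ range n, ∑ k ∈ range n,
          (fallingRatio θ n (j + 1) / (j + 1) * (fallingRatio θ n (k + 1) / (k + 1)) -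
            fallingRatio θ n (j + k + 2) / ((j + 1) * (k + 1))) := by
      simp only [hIcc, fallingRatio.ite_le_eq]
      refine sum_congr rfl fun j _ ↦ sum_congr rfl fun k _ ↦ ?_
      rw [show j + 1 + (k + 1) = j + k + 2 by ring]
      push_cast
      rw [div_mul_div_comm, ← sub_div, one_div_mul_eq_div]
    _ = (∑ k ∈ range n, 1 / (θ + k)) ^ 2 -
          ((∑ k ∈ range n, 1 / (θ + k)) ^ 2 - ∑ k ∈ range n, 1 / (θ + k) ^ 2) := by
      simp only [sum_sub_distrib]
      rw [← sum_mul_sum, fallingRatio.sum_div_succ hθ le_rfl,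
        fallingRatio.sum_sum_div_mul hθ le_rfl, sq]
    _ = ∑ k ∈ range n, 1 / (θ + k) ^ 2 := sub_sub_cancel _ _

end FallingRatio

/-- For every `n ≥ 1`,
`∑_{1≤j,k≤n} (1/(jk)) (Ψ_n(j)Ψ_n(k) − Ψ_n(j+k)·1_{j+k≤n}) = ∑_{k=0}^{n−1} 1/(θ+k)²`. -/
theorem stmt_5 (θ : ℝ) (hθ : 0 < θ) (n : ℕ) (hn : 1 ≤ n) :
    ∑ j ∈ Finset.Icc 1 n, ∑ k ∈ Finset.Icc 1 n,
        (1 / ((j : ℝ) * (k : ℝ))) *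
          (Psi θ n j * Psi θ n k - (if j + k ≤ n then Psi θ n (j + k) else 0))
      = ∑ k ∈ Finset.range n, 1 / (θ + (k : ℝ)) ^ 2 :=
  stmt_5_general θ n fun _ _ ↦ by positivity
end

section
/- Let θ > 0, N ≥ 1 an integer, and let α, β be real numbers with 0 ≤ α < 1 and α < β ≤ α + 1. Set ω_j := {jβ} − {jα}. Then the variance of X_N^I under the Ewens measure of parameter θ on S_N satisfies ∑_{σ ∈ S_N} P_θ^{(N)}(σ) X_N^I(σ)² − (∑_{σ ∈ S_N} P_θ^{(N)}(σ) X_N^I(σ))² = θ ∑_{j=1}^N (ω_j²/j) Ψ_N(j) + θ² ∑_{1≤j,k≤N} (ω_j ω_k/(jk)) (Ψ_N(j+k)·1_{j+k≤N} − Ψ_N(j)Ψ_N(k)). -/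
open Finset

/-- The number of `j`-cycles of a permutation of `{1,…,N}`, where fixed points
are counted as `1`-cycles. -/
def cycleCount (N : ℕ) (σ : Equiv.Perm (Fin N)) (j : ℕ) : ℕ :=
  if j = 1 then N - σ.support.card else σ.cycleType.count j

/-- The total number of cycles of `σ`, fixed points counted as `1`-cycles. -/
def totalCycles (N : ℕ) (σ : Equiv.Perm (Fin N)) : ℕ :=
  Multiset.card σ.cycleType + (N - σ.support.card)

/-- The Ewens probability of parameter `θ` of the permutation `σ`:
`θ^{K(σ)} / (θ(θ+1)⋯(θ+N−1))`. -/
noncomputable def ewens (θ : ℝ) (N : ℕ) (σ : Equiv.Perm (Fin N)) : ℝ :=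
  θ ^ totalCycles N σ / ∏ i ∈ Finset.range N, (θ + (i : ℝ))

/-- The number of eigenvalues of the permutation matrix of `σ` in the arc
`(e^{2iπα}, e^{2iπβ}]`: `X_N^I(σ) = ∑_{j=1}^N a_{N,j}(σ)(⌊jβ⌋ − ⌊jα⌋)`. -/
noncomputable def XNI (N : ℕ) (α β : ℝ) (σ : Equiv.Perm (Fin N)) : ℝ :=
  ∑ j ∈ Finset.Icc 1 N,
    (cycleCount N σ j : ℝ) * ((⌊(j : ℝ) * β⌋ : ℝ) - (⌊(j : ℝ) * α⌋ : ℝ))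

/-!
Write `z_λ` for the order of the centralizer of a permutation of cycle type `λ`. There are
`N! / z_λ` such permutations, so the Ewens measure gives a partition `λ` of `N` the mass
`(θ ^ ℓ(λ) / z_λ) / Z_N`, with normalizing constant `Z_N = θ(θ+1)⋯(θ+N−1) / N!`. Adding a part `j`
to `λ` multiplies `z_λ` by `j (m_j(λ) + 1)`. Hence weighting partitions of `N` by their number of
parts equal to `j` amounts to summing over partitions of `N − j`, at the cost of a factor `θ / j`.
Applied once and twice this computes the first two moments of the cycle counts, where
`Ψ_N(j) = Z_{N−j} / Z_N`. Finally `∑_j j a_{N,j} = N`, so `X_N^I` differs from `-∑_j ω_j a_{N,j}`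
by a constant, and its variance is a double sum of covariances of cycle counts.
-/

open scoped Nat

section CentralizerOrder

/-- The number `z_λ = ∏_j j ^ m_j · m_j!`, where `m_j` is the multiplicity of `j` in `λ`: the order
of the centralizer of a permutation whose cycle lengths, including fixed points, are `λ`. -/
def centralizerOrder (m : Multiset ℕ) : ℕ :=
  m.prod * ∏ n ∈ m.toFinset, (m.count n)!

lemma prod_factorial_count_cons {α : Type*} [DecidableEq α] (a : α) (m : Multiset α) :
    ∏ x ∈ (a ::ₘ m).toFinset, ((a ::ₘ m).count x)! =
      (m.count a + 1) * ∏ x ∈ m.toFinset, (m.count x)! := by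
  have extend : ∏ x ∈ m.toFinset, (m.count x)! = ∏ x ∈ (a ::ₘ m).toFinset, (m.count x)! :=
    prod_subset (by simp) fun x _ hx ↦ by
      rw [Multiset.count_eq_zero_of_notMem (mt Multiset.mem_toFinset.2 hx), Nat.factorial_zero]
  have ha : a ∈ (a ::ₘ m).toFinset := by simp
  rw [extend, ← mul_prod_erase _ _ ha, ← mul_prod_erase _ (fun x ↦ (m.count x)!) ha, ← mul_assoc,
    Multiset.count_cons_self, Nat.factorial_succ]
  congr 1
  exact prod_congr rfl fun x hx ↦ by rw [Multiset.count_cons_of_ne (ne_of_mem_erase hx)]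

lemma centralizerOrder_cons (j : ℕ) (m : Multiset ℕ) :
    centralizerOrder (j ::ₘ m) = j * (m.count j + 1) * centralizerOrder m := by
  rw [centralizerOrder, centralizerOrder, prod_factorial_count_cons, Multiset.prod_cons]
  ring

lemma centralizerOrder_add_replicate_one {m : Multiset ℕ} (hm : 1 ∉ m) (k : ℕ) :
    centralizerOrder (m + Multiset.replicate k 1) = k ! * centralizerOrder m := by
  induction k with
  | zero => simp
  | succ k ih =>
    rw [Multiset.replicate_succ, Multiset.add_cons, centralizerOrder_cons, ih, Multiset.count_add,
      Multiset.count_eq_zero_of_notMem hm, Multiset.count_replicate_self, Nat.factorial_succ]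
    ring

lemma one_notMem_cycleType {α : Type*} [Fintype α] [DecidableEq α] (σ : Equiv.Perm α) :
    1 ∉ σ.cycleType := fun h ↦ absurd (Equiv.Perm.two_le_of_mem_cycleType h) (by norm_num)

lemma centralizerOrder_partition {α : Type*} [Fintype α] [DecidableEq α] (σ : Equiv.Perm α) :
    centralizerOrder σ.partition.parts = Nat.card (Subgroup.centralizer {σ}) := by
  rw [Equiv.Perm.nat_card_centralizer, Equiv.Perm.parts_partition,
    centralizerOrder_add_replicate_one (one_notMem_cycleType σ), centralizerOrder,
    Equiv.Perm.sum_cycleType, mul_assoc]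

end CentralizerOrder

section PartitionParts

lemma parts_eq_filter_add_replicate {n : ℕ} (p : n.Partition) :
    p.parts = p.parts.filter (2 ≤ ·) +
      Multiset.replicate (n - (p.parts.filter (2 ≤ ·)).sum) 1 := by
  have hones : p.parts.filter (¬ 2 ≤ ·) =
      Multiset.replicate (p.parts.filter (¬ 2 ≤ ·)).card 1 :=
    Multiset.eq_replicate_card.2 fun i hi ↦ by
      have := p.parts_pos (Multiset.mem_of_mem_filter hi)
      have := Multiset.of_mem_filter hi
      omega
  have hsplit := Multiset.filter_add_not (2 ≤ ·) p.parts
  have hsum := congrArg Multiset.sum hsplit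
  rw [Multiset.sum_add, p.parts_sum, hones, Multiset.sum_replicate, smul_eq_mul, mul_one] at hsum
  rw [Nat.sub_eq_of_eq_add' hsum.symm, ← hones, hsplit]

lemma partition_surjective {α : Type*} [Fintype α] [DecidableEq α] :
    Function.Surjective (Equiv.Perm.partition (α := α)) := by
  intro p
  have hsum : (p.parts.filter (2 ≤ ·)).sum ≤ Fintype.card α := by
    have := congrArg Multiset.sum (parts_eq_filter_add_replicate p)
    rw [p.parts_sum, Multiset.sum_add] at this
    omega
  obtain ⟨σ, hσ⟩ := (Equiv.Perm.exists_with_cycleType_iff α).2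
    ⟨hsum, fun _ ↦ Multiset.of_mem_filter⟩
  refine ⟨σ, Nat.Partition.ext ?_⟩
  rw [parts_eq_filter_add_replicate p, Equiv.Perm.parts_partition, ← Equiv.Perm.sum_cycleType, hσ]

lemma card_partition_eq_mul_centralizerOrder {α : Type*} [Fintype α] [DecidableEq α]
    (p : (Fintype.card α).Partition) :
    #{σ : Equiv.Perm α | σ.partition = p} * centralizerOrder p.parts = (Fintype.card α)! := by
  obtain ⟨σ, rfl⟩ := partition_surjective p
  have hclass : Nat.card {τ : Equiv.Perm α | IsConj σ τ} =
      #{τ : Equiv.Perm α | τ.partition = σ.partition} := by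
    simp only [Equiv.Perm.partition_eq_of_isConj, eq_comm (a := σ.partition), Set.coe_ofPred,
      Nat.card_eq_fintype_card, Fintype.card_subtype]
  rw [centralizerOrder_partition, Equiv.Perm.nat_card_centralizer, ← hclass,
    Equiv.Perm.card_isConj_mul_eq]

lemma sum_Icc_count_mul {n : ℕ} (p : n.Partition) :
    ∑ j ∈ Icc 1 n, p.parts.count j * j = n := by
  have hsub : p.parts.toFinset ⊆ Icc 1 n := fun j hj ↦
    have hj := Multiset.mem_toFinset.1 hj
    mem_Icc.2 ⟨p.parts_pos hj, Nat.Partition.le_of_mem_parts hj⟩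
  simpa [p.parts_sum] using (sum_multiset_count_of_subset p.parts _ hsub).symm

end PartitionParts

section PartitionSum

variable {K : Type*} [Field K] (θ : K)

/-- The weight `θ ^ ℓ(λ) / z_λ` of a partition `λ` with `ℓ(λ)` parts. -/
def cycleWeight (m : Multiset ℕ) : K :=
  θ ^ m.card / centralizerOrder m

/-- The sum of `G` over the partitions of `n`, weighted by `cycleWeight`. The function `G` is
defined on all multisets so that it can be evaluated at partitions of different integers. -/
def partitionSum (n : ℕ) (G : Multiset ℕ → K) : K :=
  ∑ p : n.Partition, cycleWeight θ p.parts * G p.parts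

/-- The cycle index of the symmetric group on `n` letters with all its variables equal to `θ`;
it is the normalizing constant of the weights `cycleWeight` on the partitions of `n`. -/
def cycleIndex (n : ℕ) : K :=
  partitionSum θ n fun _ ↦ 1

lemma sum_perm_eq_factorial_mul_partitionSum [CharZero K] {α : Type*} [Fintype α] [DecidableEq α]
    (G : Multiset ℕ → K) :
    ∑ σ : Equiv.Perm α, θ ^ σ.partition.parts.card * G σ.partition.parts =
      (Fintype.card α)! * partitionSum θ (Fintype.card α) G := by
  rw [← sum_fiberwise univ (Equiv.Perm.partition (α := α)), partitionSum, mul_sum]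
  refine sum_congr rfl fun p _ ↦ ?_
  have hcard := card_partition_eq_mul_centralizerOrder p
  have hz : (centralizerOrder p.parts : K) ≠ 0 := by
    exact_mod_cast right_ne_zero_of_mul (hcard ▸ Nat.factorial_ne_zero _)
  calc ∑ σ : Equiv.Perm α with σ.partition = p, θ ^ σ.partition.parts.card * G σ.partition.parts
      = #{σ : Equiv.Perm α | σ.partition = p} * (θ ^ p.parts.card * G p.parts) := by
        rw [← nsmul_eq_mul]
        exact sum_eq_card_nsmul fun σ hσ ↦ by rw [(mem_filter.1 hσ).2]
    _ = (Fintype.card α)! * (cycleWeight θ p.parts * G p.parts) := by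
        rw [cycleWeight, ← hcard]
        push_cast
        field_simp

lemma count_mul_cycleWeight_cons [CharZero K] (j : ℕ) (m : Multiset ℕ) :
    ((j ::ₘ m).count j : K) * cycleWeight θ (j ::ₘ m) = θ / j * cycleWeight θ m := by
  have hcount : (m.count j + 1 : K) ≠ 0 := Nat.cast_add_one_ne_zero _
  rw [cycleWeight, cycleWeight, centralizerOrder_cons, Multiset.count_cons_self,
    Multiset.card_cons]
  push_cast
  field_simp
  ring

-- Terms with no part `j` vanish; on the others, deleting one part `j` is a bijection onto the
-- partitions of `n - j`.
lemma partitionSum_count_mul [CharZero K] {n j : ℕ} (hj : 1 ≤ j) (hjn : j ≤ n)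
    (G : Multiset ℕ → K) :
    partitionSum θ n (fun m ↦ m.count j * G m) =
      θ / j * partitionSum θ (n - j) fun m ↦ G (j ::ₘ m) := by
  let e := Nat.Partition.partitionWithPartEquiv hj hjn
  calc partitionSum θ n (fun m ↦ m.count j * G m)
      = ∑ p : {p : n.Partition // j ∈ p.parts},
          cycleWeight θ p.1.parts * (p.1.parts.count j * G p.1.parts) := by
        rw [partitionSum, ← sum_filter_of_ne (p := fun p ↦ j ∈ p.parts)]
        · exact sum_subtype _ (by simp) _
        · intro p _
          contrapose!
          intro hp
          simp [hp]
    _ = ∑ q : (n - j).Partition,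
          cycleWeight θ (j ::ₘ q.parts) * ((j ::ₘ q.parts).count j * G (j ::ₘ q.parts)) :=
        (Fintype.sum_equiv e.symm _ _ fun q ↦ by simp [e]).symm
    _ = θ / j * partitionSum θ (n - j) fun m ↦ G (j ::ₘ m) := by
        rw [partitionSum, mul_sum]
        refine sum_congr rfl fun q _ ↦ ?_
        rw [← mul_assoc (θ / j), ← count_mul_cycleWeight_cons]
        ring

lemma partitionSum_count [CharZero K] {j : ℕ} (hj : 1 ≤ j) (n : ℕ) :
    partitionSum θ n (fun m ↦ m.count j) =
      θ / j * if j ≤ n then cycleIndex θ (n - j) else 0 := by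
  split_ifs with hjn
  · simpa only [mul_one] using! partitionSum_count_mul θ hj hjn fun _ ↦ 1
  · rw [mul_zero]
    refine sum_eq_zero fun p _ ↦ ?_
    have : j ∉ p.parts := fun h ↦ hjn (Nat.Partition.le_of_mem_parts h)
    simp [this]

lemma partitionSum_count_mul_count [CharZero K] {n j k : ℕ} (hj : 1 ≤ j) (hjn : j ≤ n)
    (hk : 1 ≤ k) :
    partitionSum θ n (fun m ↦ m.count j * m.count k) =
      θ ^ 2 / (j * k) * (if j + k ≤ n then cycleIndex θ (n - (j + k)) else 0) +
        if j = k then θ / j * cycleIndex θ (n - j) else 0 := by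
  have hcons : partitionSum θ (n - j) (fun m ↦ ((j ::ₘ m).count k : K)) =
      partitionSum θ (n - j) (fun m ↦ m.count k) +
        if j = k then cycleIndex θ (n - j) else 0 := by
    split_ifs with hjk
    · simp only [hjk, Multiset.count_cons_self, Nat.cast_succ, cycleIndex, partitionSum, mul_add,
        sum_add_distrib]
    · simp only [Multiset.count_cons_of_ne (Ne.symm hjk), add_zero]
  rw [partitionSum_count_mul θ hj hjn, hcons, partitionSum_count θ hk, Nat.sub_sub]
  simp only [Nat.le_sub_iff_add_le' hjn]
  rw [mul_add, ← mul_assoc, div_mul_div_comm, ← sq, mul_ite _ (θ / (j : K)), mul_zero]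

end PartitionSum

section CycleIndex

variable {K : Type*} [Field K] [CharZero K] (θ : K)

lemma natCast_mul_cycleIndex (n : ℕ) :
    n * cycleIndex θ n = θ * ∑ i ∈ range n, cycleIndex θ i := by
  calc n * cycleIndex θ n
      = ∑ j ∈ Icc 1 n, j * partitionSum θ n (fun m ↦ m.count j) := by
        simp only [cycleIndex, partitionSum, mul_sum]
        rw [sum_comm]
        refine sum_congr rfl fun p _ ↦ ?_
        have hn : (n : K) = ∑ j ∈ Icc 1 n, (p.parts.count j : K) * j := by
          exact_mod_cast (sum_Icc_count_mul p).symm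
        rw [hn, sum_mul]
        exact sum_congr rfl fun j _ ↦ by ring
    _ = ∑ j ∈ Icc 1 n, θ * cycleIndex θ (n - j) := by
        refine sum_congr rfl fun j hj ↦ ?_
        obtain ⟨hj, hjn⟩ := mem_Icc.1 hj
        have : (j : K) ≠ 0 := by exact_mod_cast Nat.ne_of_gt hj
        rw [partitionSum_count θ hj, if_pos hjn]
        field_simp
    _ = θ * ∑ i ∈ range n, cycleIndex θ i := by
        rw [mul_sum]
        refine sum_nbij' (n - ·) (n - ·) ?_ ?_ ?_ ?_ fun _ _ ↦ rfl <;>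
          simp only [mem_Icc, mem_range] <;> omega

lemma succ_mul_cycleIndex_succ (n : ℕ) :
    (n + 1) * cycleIndex θ (n + 1) = (θ + n) * cycleIndex θ n := by
  have hsucc := natCast_mul_cycleIndex θ (n + 1)
  rw [sum_range_succ] at hsucc
  push_cast at hsucc
  linear_combination hsucc - natCast_mul_cycleIndex θ n

lemma factorial_mul_cycleIndex (n : ℕ) :
    n ! * cycleIndex θ n = ∏ i ∈ range n, (θ + i) := by
  induction n with
  | zero => simp [cycleIndex, partitionSum, cycleWeight, centralizerOrder]
  | succ n ih =>
    rw [prod_range_succ, ← ih, Nat.factorial_succ]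
    push_cast
    linear_combination (n ! : K) * succ_mul_cycleIndex_succ θ n

variable {θ} in
lemma cycleIndex_ne_zero {n : ℕ} (hθ : ∀ i < n, θ + i ≠ 0) : cycleIndex θ n ≠ 0 := by
  refine right_ne_zero_of_mul (a := (n ! : K)) ?_
  rw [factorial_mul_cycleIndex]
  exact prod_ne_zero_iff.2 fun i hi ↦ hθ i (mem_range.1 hi)

end CycleIndex

section WeightedCovariance

variable {ι R : Type*} [Fintype ι] [CommRing R] (w : ι → R)

/-- The covariance of `X` and `Y` when each `i` has mass `w i`. The masses need not be nonnegative
and their sum is not normalized. -/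
def weightedCov (X Y : ι → R) : R :=
  ∑ i, w i * (X i * Y i) - (∑ i, w i * X i) * ∑ i, w i * Y i

lemma weightedCov_comm (X Y : ι → R) : weightedCov w X Y = weightedCov w Y X := by
  simp only [weightedCov, mul_comm]

lemma weightedCov_sum_left {κ : Type*} (s : Finset κ) (u : κ → R) (X : κ → ι → R) (Y : ι → R) :
    weightedCov w (fun i ↦ ∑ j ∈ s, u j * X j i) Y = ∑ j ∈ s, u j * weightedCov w (X j) Y := by
  have mean (Z : κ → ι → R) :
      ∑ i, w i * ∑ j ∈ s, u j * Z j i = ∑ j ∈ s, u j * ∑ i, w i * Z j i := by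
    simp only [mul_sum]
    rw [sum_comm]
    simp only [mul_left_comm]
  have product (i : ι) : (∑ j ∈ s, u j * X j i) * Y i = ∑ j ∈ s, u j * (X j i * Y i) := by
    simp only [sum_mul, mul_assoc]
  simp only [weightedCov, product, mean]
  rw [sum_mul, ← sum_sub_distrib]
  exact sum_congr rfl fun j _ ↦ by ring

lemma weightedCov_sum_sum {κ κ' : Type*} (s : Finset κ) (t : Finset κ') (u : κ → R) (v : κ' → R)
    (X : κ → ι → R) (Y : κ' → ι → R) :
    weightedCov w (fun i ↦ ∑ j ∈ s, u j * X j i) (fun i ↦ ∑ k ∈ t, v k * Y k i) =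
      ∑ j ∈ s, ∑ k ∈ t, u j * v k * weightedCov w (X j) (Y k) := by
  rw [weightedCov_sum_left]
  refine sum_congr rfl fun j _ ↦ ?_
  rw [weightedCov_comm, weightedCov_sum_left, mul_sum]
  exact sum_congr rfl fun k _ ↦ by rw [weightedCov_comm, mul_assoc]

variable {w} in
lemma weightedCov_const_sub (hw : ∑ i, w i = 1) (c d : R) (X Y : ι → R) :
    weightedCov w (fun i ↦ c - X i) (fun i ↦ d - Y i) = weightedCov w X Y := by
  have mean (c : R) (X : ι → R) : ∑ i, w i * (c - X i) = c - ∑ i, w i * X i := by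
    simp only [mul_sub, sum_sub_distrib, ← sum_mul, hw, one_mul]
  have mixed : ∑ i, w i * ((c - X i) * (d - Y i)) =
      c * d - c * (∑ i, w i * Y i) - d * (∑ i, w i * X i) + ∑ i, w i * (X i * Y i) := by
    rw [← one_mul (c * d), ← hw]
    simp only [sum_mul, mul_sum, ← sum_sub_distrib, ← sum_add_distrib]
    exact sum_congr rfl fun i _ ↦ by ring
  rw [weightedCov, weightedCov, mean, mean, mixed]
  ring

end WeightedCovariance

section Ewens

variable {N : ℕ}

lemma totalCycles_eq_card_parts (σ : Equiv.Perm (Fin N)) :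
    totalCycles N σ = σ.partition.parts.card := by
  simp [totalCycles, Equiv.Perm.parts_partition]

lemma cycleCount_eq_count_parts (σ : Equiv.Perm (Fin N)) (j : ℕ) :
    cycleCount N σ j = σ.partition.parts.count j := by
  have := Multiset.count_eq_zero_of_notMem (one_notMem_cycleType σ)
  rw [cycleCount, Equiv.Perm.parts_partition, Multiset.count_add, Multiset.count_replicate,
    Fintype.card_fin]
  grind

lemma XNI_eq_sub_sum_fract (α β : ℝ) (σ : Equiv.Perm (Fin N)) :
    XNI N α β σ = N * (β - α) -
      ∑ j ∈ Icc 1 N, (Int.fract (j * β) - Int.fract (j * α)) * cycleCount N σ j := by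
  have hN : (N : ℝ) = ∑ j ∈ Icc 1 N, (cycleCount N σ j : ℝ) * j := by
    have := sum_Icc_count_mul σ.partition
    simp only [Fintype.card_fin, ← cycleCount_eq_count_parts] at this
    exact_mod_cast this.symm
  nth_rw 1 [hN]
  rw [XNI, sum_mul, ← sum_sub_distrib]
  refine sum_congr rfl fun j _ ↦ ?_
  rw [Int.fract, Int.fract]
  ring

lemma sum_ewens_mul (θ : ℝ) (G : Multiset ℕ → ℝ) :
    ∑ σ : Equiv.Perm (Fin N), ewens θ N σ * G σ.partition.parts =
      partitionSum θ N G / cycleIndex θ N := by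
  have hsum := sum_perm_eq_factorial_mul_partitionSum (α := Fin N) θ G
  simp only [Fintype.card_fin (n := N)] at hsum
  simp only [ewens, totalCycles_eq_card_parts, ← factorial_mul_cycleIndex, div_mul_eq_mul_div,
    ← sum_div, hsum]
  exact mul_div_mul_left _ _ (Nat.cast_ne_zero.2 N.factorial_ne_zero)

variable {θ : ℝ} (hθ : ∀ i < N, θ + i ≠ 0)
include hθ

lemma sum_ewens : ∑ σ : Equiv.Perm (Fin N), ewens θ N σ = 1 := by
  have := sum_ewens_mul (N := N) θ fun _ ↦ 1
  simp only [mul_one] at this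
  rw [this]
  exact div_self (cycleIndex_ne_zero hθ)

lemma Psi_eq_cycleIndex_div {j : ℕ} (hj : j ≤ N) :
    Psi θ N j = cycleIndex θ (N - j) / cycleIndex θ N := by
  induction j with
  | zero => simp [Psi, div_self (cycleIndex_ne_zero hθ)]
  | succ j ih =>
    obtain ⟨k, rfl⟩ := Nat.exists_eq_add_of_le' hj
    have hk : θ + k ≠ 0 := hθ k (by omega)
    have hPsi : Psi θ (k + (j + 1)) (j + 1) =
        Psi θ (k + (j + 1)) j * ((k + 1) / (θ + k)) := by
      rw [Psi, prod_range_succ, ← Psi]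
      congr 2 <;> push_cast <;> ring
    rw [hPsi, ih (by omega), show k + (j + 1) - j = k + 1 by omega, Nat.add_sub_cancel,
      div_mul_div_comm, mul_comm (cycleIndex θ (k + 1)), succ_mul_cycleIndex_succ,
      mul_comm (θ + (k : ℝ)), mul_div_mul_right _ _ hk]

lemma sum_ewens_mul_cycleCount {j : ℕ} (hj : j ∈ Icc 1 N) :
    ∑ σ : Equiv.Perm (Fin N), ewens θ N σ * cycleCount N σ j = θ / j * Psi θ N j := by
  obtain ⟨hj, hjN⟩ := mem_Icc.1 hj
  simp only [cycleCount_eq_count_parts]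
  rw [sum_ewens_mul θ fun m ↦ (m.count j : ℝ), partitionSum_count θ hj, if_pos hjN,
    Psi_eq_cycleIndex_div hθ hjN, mul_div_assoc]

lemma sum_ewens_mul_cycleCount_mul_cycleCount {j k : ℕ} (hj : j ∈ Icc 1 N) (hk : 1 ≤ k) :
    ∑ σ : Equiv.Perm (Fin N), ewens θ N σ * (cycleCount N σ j * cycleCount N σ k) =
      θ ^ 2 / (j * k) * (if j + k ≤ N then Psi θ N (j + k) else 0) +
        if j = k then θ / j * Psi θ N j else 0 := by
  obtain ⟨hj, hjN⟩ := mem_Icc.1 hj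
  simp only [cycleCount_eq_count_parts]
  rw [sum_ewens_mul θ fun m ↦ (m.count j * m.count k : ℝ), partitionSum_count_mul_count θ hj hjN hk,
    Psi_eq_cycleIndex_div hθ hjN, add_div, mul_div_assoc, ite_div, ite_div, zero_div, mul_div_assoc]
  congr 2
  exact ite_congr rfl (fun h ↦ (Psi_eq_cycleIndex_div hθ h).symm) fun _ ↦ rfl

lemma weightedCov_ewens_cycleCount {j k : ℕ} (hj : j ∈ Icc 1 N) (hk : k ∈ Icc 1 N) :
    weightedCov (ewens θ N) (fun σ ↦ cycleCount N σ j) (fun σ ↦ cycleCount N σ k) =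
      (if j = k then θ / j * Psi θ N j else 0) + θ ^ 2 / (j * k) *
        ((if j + k ≤ N then Psi θ N (j + k) else 0) - Psi θ N j * Psi θ N k) := by
  rw [weightedCov, sum_ewens_mul_cycleCount_mul_cycleCount hθ hj (mem_Icc.1 hk).1,
    sum_ewens_mul_cycleCount hθ hj, sum_ewens_mul_cycleCount hθ hk]
  ring

lemma weightedCov_ewens_sum_cycleCount (u v : ℕ → ℝ) :
    weightedCov (ewens θ N) (fun σ ↦ ∑ j ∈ Icc 1 N, u j * cycleCount N σ j)
        (fun σ ↦ ∑ k ∈ Icc 1 N, v k * cycleCount N σ k) =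
      θ * ∑ j ∈ Icc 1 N, u j * v j / j * Psi θ N j +
        θ ^ 2 * ∑ j ∈ Icc 1 N, ∑ k ∈ Icc 1 N, u j * v k / (j * k) *
          ((if j + k ≤ N then Psi θ N (j + k) else 0) - Psi θ N j * Psi θ N k) := by
  rw [weightedCov_sum_sum, mul_sum, mul_sum, ← sum_add_distrib]
  refine sum_congr rfl fun j hj ↦ ?_
  have diagonal : θ * (u j * v j / j * Psi θ N j) =
      ∑ k ∈ Icc 1 N, u j * v k * if j = k then θ / j * Psi θ N j else 0 := by
    simp only [mul_ite, mul_zero, sum_ite_eq, if_pos hj]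
    ring
  rw [diagonal, mul_sum, ← sum_add_distrib]
  refine sum_congr rfl fun k hk ↦ ?_
  rw [weightedCov_ewens_cycleCount hθ hj hk]
  ring

end Ewens

/-- For `θ < 0` the weights `ewens θ N` form a signed measure of total mass one. -/
theorem stmt_8_general (θ : ℝ) (N : ℕ) (hθ : ∀ i < N, θ + i ≠ 0) (α β : ℝ)
    (ω : ℕ → ℝ) (hω : ∀ j, ω j = Int.fract ((j : ℝ) * β) - Int.fract ((j : ℝ) * α)) :
    (∑ σ : Equiv.Perm (Fin N), ewens θ N σ * (XNI N α β σ) ^ 2)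
      - (∑ σ : Equiv.Perm (Fin N), ewens θ N σ * XNI N α β σ) ^ 2
      = θ * ∑ j ∈ Finset.Icc 1 N, (ω j) ^ 2 / (j : ℝ) * Psi θ N j
        + θ ^ 2 * ∑ j ∈ Finset.Icc 1 N, ∑ k ∈ Finset.Icc 1 N,
            (ω j * ω k / ((j : ℝ) * (k : ℝ))) *
              ((if j + k ≤ N then Psi θ N (j + k) else 0) - Psi θ N j * Psi θ N k) := by
  have hX : XNI N α β = fun σ ↦ N * (β - α) - ∑ j ∈ Icc 1 N, ω j * cycleCount N σ j :=
    funext fun σ ↦ by simp only [hω, XNI_eq_sub_sum_fract]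
  calc _ = weightedCov (ewens θ N) (XNI N α β) (XNI N α β) := by simp only [weightedCov, sq]
    _ = _ := by
      rw [hX, weightedCov_const_sub (sum_ewens hθ), weightedCov_ewens_sum_cycleCount hθ]
      simp only [sq]

/-- The variance of `X_N^I` under the Ewens measure of parameter `θ` equals
`θ ∑_{j=1}^N (ω_j²/j) Ψ_N(j)
  + θ² ∑_{1≤j,k≤N} (ω_j ω_k/(jk)) (Ψ_N(j+k)·1_{j+k≤N} − Ψ_N(j)Ψ_N(k))`,
where `ω_j = {jβ} − {jα}`. -/
theorem stmt_8 (θ : ℝ) (hθ : 0 < θ) (N : ℕ) (hN : 1 ≤ N) (α β : ℝ)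
    (hα0 : 0 ≤ α) (hα1 : α < 1) (hαβ : α < β) (hβ : β ≤ α + 1)
    (ω : ℕ → ℝ) (hω : ∀ j, ω j = Int.fract ((j : ℝ) * β) - Int.fract ((j : ℝ) * α)) :
    (∑ σ : Equiv.Perm (Fin N), ewens θ N σ * (XNI N α β σ) ^ 2)
      - (∑ σ : Equiv.Perm (Fin N), ewens θ N σ * XNI N α β σ) ^ 2
      = θ * ∑ j ∈ Finset.Icc 1 N, (ω j) ^ 2 / (j : ℝ) * Psi θ N j
        + θ ^ 2 * ∑ j ∈ Finset.Icc 1 N, ∑ k ∈ Finset.Icc 1 N,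
            (ω j * ω k / ((j : ℝ) * (k : ℝ))) *
              ((if j + k ≤ N then Psi θ N (j + k) else 0) - Psi θ N j * Psi θ N k) :=
  stmt_8_general θ N (fun _ _ ↦ by positivity) α β ω hω
end

section
/- Let θ > 0 and let δ ∈ (0,1] be a fixed real number. Define S_N := ∑_{j=1}^N (Ψ_N(j)/j) {jδ}(1 − {jδ}). Then S_N / log N converges as N → ∞ to ℓ, where ℓ = 1/6 if δ is irrational, and ℓ = 1/6 − 1/(6q²) if δ = p/q with p, q coprime integers and q ≥ 2. (Equivalently, the variance of the number of eigenvalues of a modified random permutation matrix under the Ewens measure of parameter θ lying in a fixed arc of length δ is asymptotic to ℓ θ log N.) -/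
open Filter Finset

/-!
The weights satisfy the exact identity `(N - j) Ψ_N(j) + θ ∑_{i ≤ j} Ψ_N(i) = N`. Taking `j = N`
gives `∑_j Ψ_N(j) = N / θ`, and subtracting its case `j = 0` shows that `|Ψ_N(j) - 1| / j` is
`O((1 + Ψ_N(j)) / N)`, hence that `∑_j |Ψ_N(j) - 1| / j` is bounded: replacing `Ψ_N(j)` by `1`
does not change the limit, which is the logarithmic mean of `{jδ}(1 - {jδ})`.

Since `x (1 - x) = 1/6 - B₂(x)`, it remains to find the logarithmic mean of `B₂({jδ})`. In its
absolutely convergent Fourier expansion the character `e(mjδ)` has logarithmic mean `1` if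
`mδ ∈ ℤ` and `0` otherwise. If `δ` has finite order `n` in `ℝ/ℤ`, the surviving frequencies are the
multiples of `n`, and the coefficients scale as `m⁻²`, so they sum to `B₂(0) / n² = 1 / (6 n²)`;
if `δ` has infinite order, no nonzero frequency survives.
-/

section LogAverage

section Module

variable {E F : Type*} [AddCommGroup E] [Module ℝ E] [AddCommGroup F] [Module ℝ F]

/-- The logarithmic average `(1 / log N) ∑_{j=1}^N f j / j` of a sequence `f`; its limit as `N → ∞`
is the logarithmic mean of `f`. The value `f 0` does not enter. -/
noncomputable def logAverage (f : ℕ → E) (N : ℕ) : E :=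
  (Real.log N)⁻¹ • ∑ j ∈ Icc 1 N, (j : ℝ)⁻¹ • f j

lemma logAverage_sub (f g : ℕ → E) (N : ℕ) :
    logAverage (fun j ↦ f j - g j) N = logAverage f N - logAverage g N := by
  simp only [logAverage, smul_sub, sum_sub_distrib]

lemma map_logAverage (L : E →ₗ[ℝ] F) (f : ℕ → E) (N : ℕ) :
    L (logAverage f N) = logAverage (fun j ↦ L (f j)) N := by
  simp only [logAverage, map_smul, map_sum]

lemma hasSum_logAverage [TopologicalSpace E] [ContinuousAdd E] [ContinuousConstSMul ℝ E]
    {ι : Type*} {g : ι → ℕ → E} {f : ℕ → E} (hf : ∀ j, HasSum (fun k ↦ g k j) (f j)) (N : ℕ) :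
    HasSum (fun k ↦ logAverage (g k) N) (logAverage f N) :=
  (hasSum_sum fun j _ ↦ (hf j).const_smul (j : ℝ)⁻¹).const_smul (Real.log N)⁻¹

end Module

variable {E : Type*} [NormedAddCommGroup E] [NormedSpace ℝ E]

lemma norm_logAverage_le {f : ℕ → E} {C : ℝ} (hf : ∀ j, ‖f j‖ ≤ C) (N : ℕ) :
    ‖logAverage f N‖ ≤ logAverage (fun _ ↦ C) N := by
  have hlog : 0 ≤ (Real.log N)⁻¹ := inv_nonneg.mpr (Real.log_natCast_nonneg N)
  rw [logAverage, logAverage, norm_smul, Real.norm_of_nonneg hlog, smul_eq_mul]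
  gcongr
  refine norm_sum_le_of_le _ fun j _ ↦ ?_
  rw [norm_smul, Real.norm_of_nonneg (by positivity), smul_eq_mul]
  gcongr
  exact hf j

lemma tendsto_log_natCast_atTop : Tendsto (fun N : ℕ ↦ Real.log N) atTop atTop :=
  Real.tendsto_log_atTop.comp tendsto_natCast_atTop_atTop

lemma tendsto_inv_log_smul_zero {u : ℕ → E} (hu : IsBoundedUnder (· ≤ ·) atTop (norm ∘ u)) :
    Tendsto (fun N : ℕ ↦ (Real.log N)⁻¹ • u N) atTop (nhds 0) :=
  tendsto_log_natCast_atTop.inv_tendsto_atTop.zero_smul_isBoundedUnder_le hu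

lemma tendsto_logAverage_const (c : E) :
    Tendsto (logAverage fun _ ↦ c) atTop (nhds c) := by
  have hbdd : IsBoundedUnder (· ≤ ·) atTop (norm ∘ fun N : ℕ ↦ (harmonic N - Real.log N : ℝ)) :=
    Real.tendsto_harmonic_sub_log.norm.isBoundedUnder_le
  have hratio : Tendsto (fun N : ℕ ↦ (Real.log N)⁻¹ * harmonic N) atTop (nhds 1) := by
    have h := (tendsto_inv_log_smul_zero hbdd).add_const 1
    rw [zero_add] at h
    refine h.congr' ?_
    filter_upwards [tendsto_log_natCast_atTop.eventually_ne_atTop 0] with N hN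
    rw [smul_eq_mul, mul_sub, inv_mul_cancel₀ hN, sub_add_cancel]
  have h := hratio.smul_const c
  rw [one_smul] at h
  refine h.congr fun N ↦ ?_
  rw [logAverage, ← sum_smul, smul_smul, harmonic_eq_sum_Icc]
  push_cast
  rfl

/- Summation by parts makes `∑ f j / j` a Cauchy sequence, so dividing by `log N` kills it. -/
lemma tendsto_logAverage_zero_of_norm_sum_le {f : ℕ → E} {C : ℝ}
    (hf : ∀ n, ‖∑ i ∈ range n, f (i + 1)‖ ≤ C) :
    Tendsto (logAverage f) atTop (nhds 0) := by
  have hanti : Antitone fun i : ℕ ↦ 1 / ((i : ℝ) + 1) := fun i j hij ↦ by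
    dsimp only
    gcongr
  have hcauchy := hanti.cauchySeq_series_mul_of_tendsto_zero_of_bounded
    tendsto_one_div_add_atTop_nhds_zero_nat hf
  obtain ⟨B, hB⟩ := hcauchy.isBounded_range.exists_norm_le
  have hbdd : IsBoundedUnder (· ≤ ·) atTop
      (norm ∘ fun N ↦ ∑ i ∈ range N, (1 / ((i : ℝ) + 1)) • f (i + 1)) :=
    isBoundedUnder_of ⟨B, fun N ↦ hB _ ⟨N, rfl⟩⟩
  refine (tendsto_inv_log_smul_zero hbdd).congr fun N ↦ ?_
  rw [logAverage, ← Ico_add_one_right_eq_Icc, sum_Ico_eq_sum_range]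
  simp only [one_div, add_tsub_cancel_right, Nat.cast_add, Nat.cast_one, add_comm 1]

lemma tendsto_logAverage_pow_zero {𝕜 : Type*} [NormedField 𝕜] [NormedAlgebra ℝ 𝕜] {z : 𝕜}
    (hz : ‖z‖ ≤ 1) (hz1 : z ≠ 1) :
    Tendsto (logAverage fun j ↦ z ^ j) atTop (nhds 0) := by
  refine tendsto_logAverage_zero_of_norm_sum_le (C := 2 / ‖z - 1‖) fun n ↦ ?_
  have hgeom : ∑ i ∈ range n, z ^ (i + 1) = z * ((z ^ n - 1) / (z - 1)) := by
    simp only [pow_succ', ← mul_sum, geom_sum_eq hz1]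
  have hnum : ‖z ^ n - 1‖ ≤ 2 := by
    refine (norm_sub_le _ _).trans ?_
    rw [norm_pow, norm_one]
    linarith [pow_le_one₀ (n := n) (norm_nonneg z) hz]
  rw [hgeom, norm_mul, norm_div]
  refine (mul_le_of_le_one_left (by positivity) hz).trans ?_
  gcongr

lemma tendsto_logAverage_of_hasSum [CompleteSpace E] {ι : Type*} {F : ι → ℕ → E} {f : ℕ → E}
    {b : ι → ℝ} {ℓ : ι → E} (hb : Summable b) (hFb : ∀ k j, ‖F k j‖ ≤ b k)
    (hF : ∀ k, Tendsto (logAverage (F k)) atTop (nhds (ℓ k)))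
    (hf : ∀ j, HasSum (fun k ↦ F k j) (f j)) :
    Tendsto (logAverage f) atTop (nhds (∑' k, ℓ k)) := by
  have htsum : Tendsto (fun N ↦ ∑' k, logAverage (F k) N) atTop (nhds (∑' k, ℓ k)) := by
    refine tendsto_tsum_of_dominated_convergence (hb.mul_left 2) hF ?_
    have hlt : ∀ᶠ N in atTop, logAverage (fun _ ↦ (1 : ℝ)) N < 2 :=
      (tendsto_logAverage_const (1 : ℝ)).eventually_lt_const one_lt_two
    filter_upwards [hlt] with N hN k
    have hbk : 0 ≤ b k := (norm_nonneg _).trans (hFb k 0)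
    calc ‖logAverage (F k) N‖ ≤ logAverage (fun _ ↦ b k) N := norm_logAverage_le (hFb k) N
      _ = logAverage (fun _ ↦ (1 : ℝ)) N * b k := by
        simp only [logAverage, smul_eq_mul, mul_one, ← sum_mul, mul_assoc]
      _ ≤ 2 * b k := by gcongr
  exact htsum.congr fun N ↦ (hasSum_logAverage hf N).tsum_eq

lemma tendsto_weighted_logAverage {w : ℕ → ℕ → ℝ} {f : ℕ → E} {C D : ℝ} {ℓ : E}
    (hw : ∀ N, ∑ j ∈ Icc 1 N, |w N j - 1| / j ≤ C) (hf : ∀ j, ‖f j‖ ≤ D)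
    (hℓ : Tendsto (logAverage f) atTop (nhds ℓ)) :
    Tendsto (fun N : ℕ ↦ (Real.log N)⁻¹ • ∑ j ∈ Icc 1 N, (w N j / j) • f j) atTop (nhds ℓ) := by
  have hbdd : IsBoundedUnder (· ≤ ·) atTop
      (norm ∘ fun N ↦ ∑ j ∈ Icc 1 N, ((w N j - 1) / j) • f j) := by
    refine isBoundedUnder_of ⟨C * D, fun N ↦ ?_⟩
    have hD : 0 ≤ D := (norm_nonneg _).trans (hf 0)
    calc ‖∑ j ∈ Icc 1 N, ((w N j - 1) / j) • f j‖ ≤ ∑ j ∈ Icc 1 N, |w N j - 1| / j * D := by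
          refine norm_sum_le_of_le _ fun j _ ↦ ?_
          rw [norm_smul, norm_div, Real.norm_natCast, Real.norm_eq_abs]
          gcongr
          exact hf j
      _ ≤ C * D := by
          rw [← sum_mul]
          gcongr
          exact hw N
  have h := (tendsto_inv_log_smul_zero hbdd).add hℓ
  rw [zero_add] at h
  refine h.congr fun N ↦ ?_
  simp only [logAverage, ← smul_add, ← sum_add_distrib, ← add_smul, inv_eq_one_div, ← add_div,
    sub_add_cancel]

end LogAverage

section Fourier

open scoped Classical in
lemma tendsto_logAverage_fourier {T : ℝ} [Fact (0 < T)] (m : ℤ) (x : AddCircle T) :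
    Tendsto (logAverage fun j ↦ fourier m (j • x)) atTop (nhds (if m • x = 0 then 1 else 0)) := by
  have hpow (j : ℕ) : fourier m (j • x) = fourier m x ^ j := by
    rw [fourier_apply, fourier_apply, smul_comm, AddCircle.toCircle_nsmul, Circle.coe_pow]
  simp only [hpow]
  split_ifs with hm
  · simp only [fourier_apply, hm, AddCircle.toCircle_zero, Circle.coe_one, one_pow]
    exact tendsto_logAverage_const 1
  · refine tendsto_logAverage_pow_zero (Circle.norm_coe _).le fun h ↦ hm ?_
    refine AddCircle.injective_toCircle (Fact.out : 0 < T).ne' (Circle.ext ?_)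
    rw [AddCircle.toCircle_zero]
    exact h

open scoped Classical in
lemma tendsto_logAverage_of_hasSum_fourier {T : ℝ} [Fact (0 < T)] {c : ℤ → ℂ}
    {x : AddCircle T} {f : ℕ → ℂ} (hf : ∀ j : ℕ, HasSum (fun m ↦ c m * fourier m (j • x)) (f j)) :
    Tendsto (logAverage f) atTop (nhds (∑' m : ℤ, if m • x = 0 then c m else 0)) := by
  have hc : Summable c := by simpa using (hf 0).summable
  refine tendsto_logAverage_of_hasSum hc.norm (fun m j ↦ ?_) (fun m ↦ ?_) hf
  · rw [norm_mul, fourier_apply, Circle.norm_coe, mul_one]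
  · have h := (tendsto_logAverage_fourier m x).const_mul (c m)
    rw [mul_ite, mul_one, mul_zero] at h
    exact h.congr fun N ↦ map_logAverage (LinearMap.mulLeft ℝ (c m)) _ N

lemma hasSum_bernoulliFourierCoeff_mul_fourier {k : ℕ} (hk : 2 ≤ k) (x : ℝ) :
    HasSum (fun m : ℤ ↦ bernoulliFourierCoeff k m * fourier m (x : UnitAddCircle))
      (bernoulliFun k (Int.fract x)) := by
  have hC : -(2 * Real.pi * Complex.I) ^ k / (k.factorial : ℂ) ≠ 0 :=
    div_ne_zero (neg_ne_zero.mpr (pow_ne_zero k Complex.two_pi_I_ne_zero))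
      (Nat.cast_ne_zero.mpr k.factorial_ne_zero)
  have h := (hasSum_one_div_pow_mul_fourier_mul_bernoulliFun hk
    ⟨Int.fract_nonneg x, (Int.fract_lt_one x).le⟩).mul_left
      (-(2 * Real.pi * Complex.I) ^ k / (k.factorial : ℂ))⁻¹
  rw [inv_mul_cancel_left₀ hC] at h
  refine h.congr_fun fun m ↦ ?_
  rw [bernoulliFourierCoeff_eq (by omega), mul_pow, AddCircle.coe_fract, ← mul_assoc]
  congr 1
  field_simp

lemma hasSum_bernoulliFourierCoeff {k : ℕ} (hk : 2 ≤ k) :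
    HasSum (fun m : ℤ ↦ bernoulliFourierCoeff k m) (bernoulli k : ℂ) := by
  simpa [bernoulliFun_eval_zero] using hasSum_bernoulliFourierCoeff_mul_fourier hk 0

lemma bernoulliFourierCoeff_natCast_mul {k : ℕ} (hk : k ≠ 0) (n : ℕ) (m : ℤ) :
    bernoulliFourierCoeff k (n * m) = bernoulliFourierCoeff k m / (n : ℂ) ^ k := by
  rw [bernoulliFourierCoeff_eq hk, bernoulliFourierCoeff_eq hk, div_div, ← mul_pow]
  push_cast
  ring

lemma hasSum_ite_dvd_bernoulliFourierCoeff {k : ℕ} (hk : 2 ≤ k) (n : ℕ) :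
    HasSum (fun m : ℤ ↦ if (n : ℤ) ∣ m then bernoulliFourierCoeff k m else 0)
      (bernoulli k / (n : ℂ) ^ k) := by
  have hk0 : k ≠ 0 := by omega
  rcases eq_or_ne n 0 with rfl | hn
  · have hzero (m : ℤ) : (if ((0 : ℕ) : ℤ) ∣ m then bernoulliFourierCoeff k m else 0) = 0 := by
      rw [ite_eq_right_iff, Nat.cast_zero, zero_dvd_iff]
      rintro rfl
      exact bernoulliFourierCoeff_zero hk0
    rw [funext hzero, Nat.cast_zero, zero_pow hk0, div_zero]
    exact hasSum_zero
  · have hinj : Function.Injective fun m : ℤ ↦ (n : ℤ) * m :=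
      mul_right_injective₀ (Nat.cast_ne_zero.mpr hn)
    rw [← hinj.hasSum_iff fun m hm ↦ if_neg fun ⟨d, hd⟩ ↦ hm ⟨d, hd.symm⟩]
    refine ((hasSum_bernoulliFourierCoeff hk).div_const ((n : ℂ) ^ k)).congr_fun fun m ↦ ?_
    rw [Function.comp_apply, if_pos (dvd_mul_right _ m), bernoulliFourierCoeff_natCast_mul hk0]

/- At a point of infinite order, where `addOrderOf` is `0`, the limit is `bernoulli k / 0 = 0`,
which is the integral of `bernoulliFun k` over `[0, 1]`. -/
lemma tendsto_logAverage_bernoulliFun_fract {k : ℕ} (hk : 2 ≤ k) (δ : ℝ) :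
    Tendsto (logAverage fun j ↦ bernoulliFun k (Int.fract (j * δ))) atTop
      (nhds (bernoulli k / (addOrderOf (δ : UnitAddCircle) : ℝ) ^ k)) := by
  have hexp (j : ℕ) : HasSum
      (fun m : ℤ ↦ bernoulliFourierCoeff k m * fourier m (j • (δ : UnitAddCircle)))
      (bernoulliFun k (Int.fract (j * δ))) := by
    rw [← AddCircle.coe_nsmul, nsmul_eq_mul]
    exact hasSum_bernoulliFourierCoeff_mul_fourier hk _
  have hcomplex := tendsto_logAverage_of_hasSum_fourier hexp
  simp only [← addOrderOf_dvd_iff_zsmul_eq_zero] at hcomplex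
  rw [(hasSum_ite_dvd_bernoulliFourierCoeff hk _).tsum_eq] at hcomplex
  refine tendsto_ofReal_iff.mp ?_
  push_cast
  exact hcomplex.congr fun N ↦ (map_logAverage Complex.ofRealCLM.toLinearMap _ N).symm

lemma tendsto_logAverage_fract_mul_one_sub_fract (δ : ℝ) :
    Tendsto (logAverage fun j ↦ Int.fract (j * δ) * (1 - Int.fract (j * δ))) atTop
      (nhds (1 / 6 - 1 / (6 * (addOrderOf (δ : UnitAddCircle) : ℝ) ^ 2))) := by
  have h := (tendsto_logAverage_const (1 / 6 : ℝ)).sub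
    (tendsto_logAverage_bernoulliFun_fract le_rfl δ)
  have hvalue (a : ℝ) : ((bernoulli 2 : ℚ) : ℝ) / a = 1 / (6 * a) := by
    rw [bernoulli_two, one_div, mul_inv, div_eq_mul_inv]
    norm_num
  rw [hvalue] at h
  refine h.congr fun N ↦ ?_
  rw [← logAverage_sub]
  refine congrArg (logAverage · N) (funext fun j ↦ ?_)
  rw [bernoulliFun_two]
  ring

end Fourier

section Psi

variable {θ : ℝ} {n i j : ℕ}

lemma Psi_zero (θ : ℝ) (n : ℕ) : Psi θ n 0 = 1 := prod_range_zero _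

lemma Psi_succ_mul (hθ : 0 < θ) (hj : j < n) :
    Psi θ n (j + 1) * (θ + n - 1 - j) = Psi θ n j * (n - j) := by
  have hjn : (j : ℝ) + 1 ≤ n := mod_cast hj
  have hpos : 0 < θ + (n : ℝ) - 1 - j := by linarith
  rw [Psi, prod_range_succ, mul_assoc, div_mul_cancel₀ _ hpos.ne', Psi]

lemma Psi_nonneg (hθ : 0 < θ) (hj : j ≤ n) : 0 ≤ Psi θ n j := by
  refine prod_nonneg fun i hi ↦ ?_
  have hin : (i : ℝ) + 1 ≤ n := mod_cast (mem_range.mp hi).trans_le hj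
  apply div_nonneg <;> linarith

lemma Psi_le_one (hθ : 1 ≤ θ) (hj : j ≤ n) : Psi θ n j ≤ 1 := by
  have hin {i : ℕ} (hi : i ∈ range j) : (i : ℝ) + 1 ≤ n := mod_cast (mem_range.mp hi).trans_le hj
  refine prod_le_one (fun i hi ↦ ?_) fun i hi ↦ ?_
  · apply div_nonneg <;> linarith [hin hi]
  · exact div_le_one_of_le₀ (by linarith) (by linarith [hin hi])

lemma Psi_monotoneOn (hθ : 0 < θ) (hθ1 : θ ≤ 1) : MonotoneOn (Psi θ n) (Set.Iic n) := by
  refine monotoneOn_of_le_add_one Set.ordConnected_Iic fun j _ _ hj ↦ ?_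
  have hjn : (j : ℝ) + 1 ≤ n := mod_cast hj
  have hmul : Psi θ n j * (n - j) ≤ Psi θ n (j + 1) * (n - j) := by
    rw [← Psi_succ_mul hθ hj]
    gcongr
    · exact Psi_nonneg hθ hj
    · linarith
  exact le_of_mul_le_mul_right hmul (by linarith)

lemma Psi_le_one_add_Psi (hθ : 0 < θ) (hij : i ≤ j) (hj : j ≤ n) :
    Psi θ n i ≤ 1 + Psi θ n j := by
  rcases le_total θ 1 with hθ1 | hθ1
  · linarith [Psi_monotoneOn hθ hθ1 (hij.trans hj) hj hij]
  · linarith [Psi_le_one hθ1 (hij.trans hj), Psi_nonneg hθ hj]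

lemma sub_mul_Psi_add_mul_sum_Psi (hθ : 0 < θ) (hj : j ≤ n) :
    (n - j) * Psi θ n j + θ * ∑ i ∈ Icc 1 j, Psi θ n i = n := by
  induction j with
  | zero => simp [Psi_zero]
  | succ j ih =>
    have hsucc := Psi_succ_mul hθ hj
    rw [sum_Icc_succ_top (by omega)]
    push_cast
    linarith [ih (by omega)]

lemma sum_Psi (hθ : 0 < θ) (n : ℕ) : ∑ j ∈ Icc 1 n, Psi θ n j = n / θ := by
  rw [eq_div_iff hθ.ne']
  linarith [sub_mul_Psi_add_mul_sum_Psi hθ (le_refl n)]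

lemma abs_Psi_sub_one_div_le (hθ : 0 < θ) (hj1 : 1 ≤ j) (hj : j ≤ n) :
    |Psi θ n j - 1| / j ≤ (Psi θ n j + θ * (1 + Psi θ n j)) / n := by
  have hj0 : (0 : ℝ) < j := mod_cast hj1
  have hn0 : (0 : ℝ) < n := mod_cast hj1.trans hj
  have hΨ := Psi_nonneg hθ hj
  have hsum_nonneg : 0 ≤ ∑ i ∈ Icc 1 j, Psi θ n i :=
    sum_nonneg fun i hi ↦ Psi_nonneg hθ ((mem_Icc.mp hi).2.trans hj)
  have hsum_le : ∑ i ∈ Icc 1 j, Psi θ n i ≤ j * (1 + Psi θ n j) := by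
    have h := sum_le_card_nsmul (Icc 1 j) (Psi θ n) (1 + Psi θ n j)
      fun i hi ↦ Psi_le_one_add_Psi hθ (mem_Icc.mp hi).2 hj
    rwa [Nat.card_Icc, add_tsub_cancel_right, nsmul_eq_mul] at h
  have hid : (Psi θ n j - 1) * n = j * Psi θ n j - θ * ∑ i ∈ Icc 1 j, Psi θ n i := by
    linarith [sub_mul_Psi_add_mul_sum_Psi hθ hj]
  rw [div_le_div_iff₀ hj0 hn0]
  calc |Psi θ n j - 1| * n = |j * Psi θ n j - θ * ∑ i ∈ Icc 1 j, Psi θ n i| := by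
        rw [← hid, abs_mul, abs_of_pos hn0]
    _ ≤ j * Psi θ n j + θ * ∑ i ∈ Icc 1 j, Psi θ n i := by
        rw [abs_sub_le_iff]
        constructor <;> nlinarith
    _ ≤ j * Psi θ n j + θ * (j * (1 + Psi θ n j)) := by gcongr
    _ = (Psi θ n j + θ * (1 + Psi θ n j)) * j := by ring

lemma sum_abs_Psi_sub_one_div_le (hθ : 0 < θ) (n : ℕ) :
    ∑ j ∈ Icc 1 n, |Psi θ n j - 1| / j ≤ 1 / θ + θ + 1 := by
  rcases n.eq_zero_or_pos with rfl | hn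
  · simp only [Icc_eq_empty_of_lt zero_lt_one, sum_empty]
    positivity
  have hn0 : (n : ℝ) ≠ 0 := mod_cast hn.ne'
  calc ∑ j ∈ Icc 1 n, |Psi θ n j - 1| / j
      ≤ ∑ j ∈ Icc 1 n, (Psi θ n j + θ * (1 + Psi θ n j)) / n := sum_le_sum fun j hj ↦
        abs_Psi_sub_one_div_le hθ (mem_Icc.mp hj).1 (mem_Icc.mp hj).2
    _ = (n / θ + θ * (n + n / θ)) / n := by
        simp only [← sum_div, sum_add_distrib, ← mul_sum, sum_Psi hθ, sum_const, Nat.card_Icc,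
          add_tsub_cancel_right, nsmul_eq_mul, mul_one]
    _ = 1 / θ + θ + 1 := by
        field_simp
        ring

lemma tendsto_sum_Psi_div_log (hθ : 0 < θ) (δ : ℝ) :
    Tendsto
      (fun N : ℕ ↦
        (∑ j ∈ Icc 1 N, Psi θ N j / j * (Int.fract (j * δ) * (1 - Int.fract (j * δ))))
          / Real.log N)
      atTop (nhds (1 / 6 - 1 / (6 * (addOrderOf (δ : UnitAddCircle) : ℝ) ^ 2))) := by
  have hbdd (j : ℕ) : ‖Int.fract (j * δ) * (1 - Int.fract (j * δ))‖ ≤ 1 := by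
    have h0 := Int.fract_nonneg (j * δ)
    have h1 := Int.fract_lt_one (j * δ)
    rw [Real.norm_of_nonneg (mul_nonneg h0 (by linarith))]
    exact mul_le_one₀ h1.le (by linarith) (by linarith)
  refine (tendsto_weighted_logAverage (sum_abs_Psi_sub_one_div_le hθ) hbdd
    (tendsto_logAverage_fract_mul_one_sub_fract δ)).congr fun N ↦ ?_
  simp only [smul_eq_mul, div_eq_inv_mul _ (Real.log N)]

end Psi

lemma addOrderOf_coe_eq_zero_of_irrational {δ : ℝ} (hδ : Irrational δ) :
    addOrderOf (δ : UnitAddCircle) = 0 := by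
  rw [addOrderOf_eq_zero_iff, AddCircle.isOfFinAddOrder_iff_exists_rat_eq_div, div_one]
  exact hδ

theorem stmt_10_general (θ : ℝ) (hθ : 0 < θ) (δ : ℝ) :
    (Irrational δ →
      Tendsto
        (fun N : ℕ =>
          (∑ j ∈ Finset.Icc 1 N,
            Psi θ N j / (j : ℝ) * (Int.fract ((j : ℝ) * δ) * (1 - Int.fract ((j : ℝ) * δ))))
          / Real.log N)
        atTop (nhds (1 / 6))) ∧
    (∀ p q : ℤ, Int.gcd p q = 1 → 0 < q → δ = (p : ℝ) / (q : ℝ) →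
      Tendsto
        (fun N : ℕ =>
          (∑ j ∈ Finset.Icc 1 N,
            Psi θ N j / (j : ℝ) * (Int.fract ((j : ℝ) * δ) * (1 - Int.fract ((j : ℝ) * δ))))
          / Real.log N)
        atTop (nhds (1 / 6 - 1 / (6 * (q : ℝ) ^ 2)))) := by
  have hlim := tendsto_sum_Psi_div_log hθ δ
  refine ⟨fun hirr ↦ ?_, fun p q hpq hq hδ ↦ ?_⟩
  · simpa [addOrderOf_coe_eq_zero_of_irrational hirr] using hlim
  · lift q to ℕ using hq.le
    have horder : addOrderOf (δ : UnitAddCircle) = q := by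
      have h := AddCircle.addOrderOf_div_of_gcd_eq_one' (p := (1 : ℝ)) (mod_cast hq) hpq
      rwa [mul_one, Int.natAbs_natCast, ← Int.cast_natCast (R := ℝ), ← hδ] at h
    rwa [horder] at hlim

/-- With `S_N = ∑_{j=1}^N (Ψ_N(j)/j) {jδ}(1 − {jδ})`, the ratio `S_N / log N`
converges to `1/6` if `δ` is irrational, and to `1/6 − 1/(6q²)` if `δ = p/q`
with `p, q` coprime integers and `q ≥ 2`. -/
theorem stmt_10 (θ : ℝ) (hθ : 0 < θ) (δ : ℝ) (hδ0 : 0 < δ) (hδ1 : δ ≤ 1) :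
    (Irrational δ →
      Tendsto
        (fun N : ℕ =>
          (∑ j ∈ Finset.Icc 1 N,
            Psi θ N j / (j : ℝ) * (Int.fract ((j : ℝ) * δ) * (1 - Int.fract ((j : ℝ) * δ))))
          / Real.log N)
        atTop (nhds (1 / 6))) ∧
    (∀ p q : ℤ, Int.gcd p q = 1 → 2 ≤ q → δ = (p : ℝ) / (q : ℝ) →
      Tendsto
        (fun N : ℕ =>
          (∑ j ∈ Finset.Icc 1 N,
            Psi θ N j / (j : ℝ) * (Int.fract ((j : ℝ) * δ) * (1 - Int.fract ((j : ℝ) * δ))))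
          / Real.log N)
        atTop (nhds (1 / 6 - 1 / (6 * (q : ℝ) ^ 2)))) := by
  obtain ⟨hirrational, hrational⟩ := stmt_10_general θ hθ δ
  exact ⟨hirrational, fun p q hpq hq ↦ hrational p q hpq (by omega)⟩
end
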